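/- arXiv:2402.14676 — 3 statements merged into one kernel-verified Lean document; each statement's English description precedes it below -/
import Mathlib

section
/- (Theorem 1, via the greedy realization of the optimal expected score.) As n → ∞, the expected final score of the unrestricted player satisfies E[S_n^gr] ~ √(27n/(4π)) = (3√3/(2√π))·√n; that is, E[S_n^gr]/√n → 3√3/(2√π). -/
open MeasureTheory ProbabilityTheory Real Filter
open scoped ENNReal Topology

namespace RPSGreedy

/-- Standard basis vector `e i` of `Fin 3 → ℕ`. -/
def e (i : Fin 3) : Fin 3 → ℕ := fun j => if j = i then 1 else 0

/-- One-step transition probabilities of the greedy game process. -/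
noncomputable def stepProb (n : ℕ) (p q : (Fin 3 → ℕ) × ℤ) : ℝ≥0∞ :=
  let k := (Finset.univ.filter fun i => p.1 i = n).card
  if k = 0 then
    (if (∃ i : Fin 3, q.1 = p.1 + e i) ∧ (q.2 = p.2 - 1 ∨ q.2 = p.2 ∨ q.2 = p.2 + 1)
      then 1/9 else 0)
  else if k = 1 then
    ∑ c : Fin 3, (if p.1 c = n then
      (if q.1 = p.1 + e (c+1) ∧ q.2 = p.2 + 1 then 2/9
       else if q.1 = p.1 + e (c+1) ∧ q.2 = p.2 - 1 then 1/9
       else if q.1 = p.1 + e (c+2) ∧ q.2 = p.2 then 4/9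
       else if q.1 = p.1 + e (c+2) ∧ q.2 = p.2 + 1 then 2/9
       else 0)
      else 0)
  else if k = 2 then
    (if ∃ i : Fin 3, p.1 i < n ∧ q.1 = p.1 + e i ∧ q.2 = p.2 + 1 then 1 else 0)
  else 0

/-- The greedy game process over `3n` rounds: initial state and Markov transitions. -/
def IsGreedyProcess (n : ℕ) {Ω : Type*} [MeasurableSpace Ω] (μ : Measure Ω)
    (NS : ℕ → Ω → (Fin 3 → ℕ) × ℤ) : Prop :=
  IsProbabilityMeasure μ ∧
  (∀ t, Measurable (NS t)) ∧
  μ {ω | NS 0 ω = (fun _ => 0, 0)} = 1 ∧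
  (∀ t, t < 3 * n → ∀ f : ℕ → (Fin 3 → ℕ) × ℤ,
    μ {ω | ∀ u ≤ t + 1, NS u ω = f u}
      = stepProb n (f t) (f (t + 1)) * μ {ω | ∀ u ≤ t, NS u ω = f u})

/-!
While no move is exhausted, the opponent plays freely. With a move exhausted and `m` rounds left,
the expected gain is the lead `L = max (x₀ - x₁) (x₁ - x₂) (x₂ - x₀)` of the move counts up to
`O(√m)`, by the second moment of a martingale; and `m` further free moves would change the mean of
`L` by `O(√m)` as well. So comparing with free play for all the `3n` rounds costs `O(√m)` at the
random time when a first move is exhausted. As `√m ≤ δ + m² / δ³`, and `m²` is at most a quadratic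
form in the counts with expectation `O(n)`, this is `O(δ + n / δ³)`, hence `O(n^(1/4))` for
`δ = n^(1/4)`.

For free play, exchanging two moves negates the three cyclic differences, so `2 E[L]` is their
expected range, which is half the sum of their distances. Each distance is the deviation of three
times a binomial count from its mean, so De Moivre's formula evaluates `E[L]`, and Stirling's
formula gives the limit.
-/

section UniformWalk

open scoped BigOperators

variable {ι E F : Type*} [Fintype ι]

/-- The averaging operator of the random walk whose steps are uniform on the family `v`:
`(walkStep v ^ m) f x` is the expectation of `f` at the position reached from `x` after `m`
steps. -/
noncomputable def walkStep [Add E] (v : ι → E) : Module.End ℝ (E → ℝ) where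
  toFun f x := 𝔼 i, f (x + v i)
  map_add' _ _ := funext fun _ => Finset.expect_add_distrib _ _ _
  map_smul' _ _ := funext fun _ => (Finset.mul_expect _ _ _).symm

theorem walkStep_apply [Add E] (v : ι → E) (f : E → ℝ) (x : E) :
    walkStep v f x = 𝔼 i, f (x + v i) := rfl

theorem walkStep_pow_succ_apply [Add E] (v : ι → E) (m : ℕ) (f : E → ℝ) (x : E) :
    (walkStep v ^ (m + 1)) f x = 𝔼 i, (walkStep v ^ m) f (x + v i) := by
  rw [pow_succ', Module.End.mul_apply, walkStep_apply]

theorem walkStep_pow_mono [Add E] (v : ι → E) (m : ℕ) {f g : E → ℝ} (hfg : f ≤ g) :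
    (walkStep v ^ m) f ≤ (walkStep v ^ m) g := by
  induction m with
  | zero => simpa using hfg
  | succ m ih =>
    intro x
    simp only [walkStep_pow_succ_apply]
    exact Finset.expect_le_expect fun i _ => ih (x + v i)

theorem walkStep_pow_const [Add E] [Nonempty ι] (v : ι → E) (m : ℕ) (c : ℝ) :
    (walkStep v ^ m) (fun _ => c) = fun _ => c := by
  induction m with
  | zero => rfl
  | succ m ih =>
    funext x
    rw [walkStep_pow_succ_apply, ih, Fintype.expect_const]

theorem le_walkStep_pow_of_le_walkStep [Add E] (v : ι → E) {f : E → ℝ}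
    (hf : f ≤ walkStep v f) (m : ℕ) : f ≤ (walkStep v ^ m) f := by
  induction m with
  | zero => exact le_rfl
  | succ m ih => exact ih.trans (by simpa [pow_succ] using walkStep_pow_mono v m hf)

theorem sq_walkStep_pow_le [Add E] [Nonempty ι] (v : ι → E) (m : ℕ) (f : E → ℝ) (x : E) :
    (walkStep v ^ m) f x ^ 2 ≤ (walkStep v ^ m) (f ^ 2) x := by
  set c := (walkStep v ^ m) f x with hc
  have hexpand : (f - fun _ => c) ^ 2 = f ^ 2 - (2 * c) • f + fun _ => c ^ 2 := by
    ext y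
    simp only [Pi.pow_apply, Pi.sub_apply, Pi.add_apply, Pi.smul_apply, smul_eq_mul]
    ring
  have hvar : 0 ≤ (walkStep v ^ m) ((f - fun _ => c) ^ 2) x := by
    have h := walkStep_pow_mono v m (f := fun _ => 0) (g := (f - fun _ => c) ^ 2)
      (fun y => sq_nonneg (f y - c)) x
    rwa [walkStep_pow_const] at h
  simp only [hexpand, map_add, map_sub, map_smul, walkStep_pow_const, Pi.add_apply, Pi.sub_apply,
    Pi.smul_apply, smul_eq_mul, ← hc] at hvar
  linarith

theorem walkStep_pow_comp_addMonoidHom [AddZeroClass E] [AddZeroClass F] (v : ι → E) (φ : E →+ F)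
    (f : F → ℝ) (m : ℕ) (x : E) :
    (walkStep v ^ m) (f ∘ φ) x = (walkStep (φ ∘ v) ^ m) f (φ x) := by
  induction m generalizing x with
  | zero => rfl
  | succ m ih => simp only [walkStep_pow_succ_apply, ih, map_add, Function.comp_apply]

theorem walkStep_comp_equiv [Add E] (v : ι → E) (σ : Equiv.Perm ι) :
    walkStep (v ∘ σ) = walkStep v := by
  ext f x
  exact Fintype.expect_equiv σ _ _ fun _ => rfl

theorem walkStep_pow_apply_add_le [AddSemigroup E] [Nonempty ι] (v : ι → E) {f : E → ℝ}
    (hf : ∀ x y, f (x + y) ≤ f x + f y) (m : ℕ) (x y : E) :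
    (walkStep v ^ m) f (x + y) ≤ f x + (walkStep v ^ m) f y := by
  induction m generalizing y with
  | zero => exact hf x y
  | succ m ih =>
    simp only [walkStep_pow_succ_apply]
    rw [← Fintype.expect_const (ι := ι) (f x), ← Finset.expect_add_distrib]
    exact Finset.expect_le_expect fun i _ => by rw [add_assoc]; exact ih _

theorem walkStep_pow_of_walkStep_eq_add_const [Add E] [Nonempty ι] (v : ι → E) {f : E → ℝ} {c : ℝ}
    (hf : ∀ x, walkStep v f x = f x + c) (m : ℕ) (x : E) :
    (walkStep v ^ m) f x = f x + m * c := by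
  induction m generalizing x with
  | zero => simp
  | succ m ih =>
    simp only [walkStep_pow_succ_apply, ih, Finset.expect_add_distrib, Fintype.expect_const]
    rw [← walkStep_apply, hf]
    push_cast
    ring

end UniformWalk

section TwoPointWalk

variable {p q : ℝ}

theorem smul_add_smul_funLeft_pow_apply {E : Type*} [AddCommMonoid E] (a b : E) (m : ℕ)
    (f : E → ℝ) (x : E) :
    ((p • LinearMap.funLeft ℝ ℝ (· + a) + q • LinearMap.funLeft ℝ ℝ (· + b)) ^ m) f x =
      ∑ k ∈ Finset.range (m + 1), m.choose k * p ^ k * q ^ (m - k) *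
        f (x + k • a + (m - k) • b) := by
  have hpow (c : E) (k : ℕ) (g : E → ℝ) (y : E) :
      (LinearMap.funLeft ℝ ℝ (· + c) ^ k) g y = g (y + k • c) := by
    induction k generalizing y with
    | zero => simp
    | succ k ih =>
      rw [pow_succ', Module.End.mul_apply, LinearMap.funLeft_apply, ih, succ_nsmul', add_assoc]
  have hcomm : Commute (p • LinearMap.funLeft ℝ ℝ (· + a)) (q • LinearMap.funLeft ℝ ℝ (· + b)) := by
    refine .smul_left (.smul_right ?_ q) p
    ext g y
    simp [add_right_comm]
  simp only [hcomm.add_pow, LinearMap.sum_apply, Finset.sum_apply]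
  refine Finset.sum_congr rfl fun k _ => ?_
  rw [← nsmul_eq_mul', LinearMap.smul_apply, Pi.smul_apply, smul_pow, smul_pow,
    smul_mul_smul_comm, LinearMap.smul_apply, Pi.smul_apply, Module.End.mul_apply, hpow, hpow]
  simp only [nsmul_eq_mul, smul_eq_mul, mul_assoc]

theorem sum_range_choose_mul_pow_mul_sub (hpq : p + q = 1) (m j : ℕ) :
    ∑ k ∈ Finset.range j, m.choose k * p ^ k * q ^ (m - k) * (m * p - k) =
      j * m.choose j * p ^ j * q ^ (m + 1 - j) := by
  induction j with
  | zero => simp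
  | succ j ih =>
    rw [Finset.sum_range_succ, ih]
    rcases lt_or_ge m j with hj | hj
    · simp [Nat.choose_eq_zero_of_lt hj, Nat.choose_eq_zero_of_lt (hj.trans j.lt_succ_self)]
    have hchoose : (m.choose (j + 1) : ℝ) * (j + 1) = m.choose j * (m - j) := by
      have h := congrArg (Nat.cast (R := ℝ)) (Nat.choose_succ_right_eq m j)
      push_cast [hj] at h
      exact h
    rw [Nat.add_sub_add_right, Nat.sub_add_comm hj]
    push_cast
    linear_combination (-p ^ (j + 1) * q ^ (m - j)) * hchoose +
      (j * m.choose j * p ^ j * q ^ (m - j)) * hpq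

/-- De Moivre's formula for the mean absolute deviation of a binomial law. -/
theorem sum_range_choose_mul_pow_mul_abs_sub (hpq : p + q = 1) {m j : ℕ} (hjm : j ≤ m + 1)
    (hlow : ∀ k < j, (k : ℝ) ≤ m * p) (hhigh : ∀ k ≥ j, m * p ≤ k) :
    ∑ k ∈ Finset.range (m + 1), m.choose k * p ^ k * q ^ (m - k) * |m * p - k| =
      2 * j * m.choose j * p ^ j * q ^ (m + 1 - j) := by
  set w : ℕ → ℝ := fun k => m.choose k * p ^ k * q ^ (m - k) with hw
  have hbelow : ∑ k ∈ Finset.range j, w k * (m * p - k) =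
      j * m.choose j * p ^ j * q ^ (m + 1 - j) := sum_range_choose_mul_pow_mul_sub hpq m j
  have htotal : ∑ k ∈ Finset.range (m + 1), w k * (m * p - k) = 0 := by
    simp [hw, sum_range_choose_mul_pow_mul_sub hpq]
  have hleft : ∑ k ∈ Finset.range j, w k * |m * p - k| =
      ∑ k ∈ Finset.range j, w k * (m * p - k) :=
    Finset.sum_congr rfl fun k hk => by
      rw [abs_of_nonneg (sub_nonneg.2 (hlow k (Finset.mem_range.1 hk)))]
  have hright : ∑ k ∈ Finset.Ico j (m + 1), w k * |m * p - k| =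
      -∑ k ∈ Finset.Ico j (m + 1), w k * (m * p - k) := by
    rw [← Finset.sum_neg_distrib]
    exact Finset.sum_congr rfl fun k hk => by
      rw [abs_of_nonpos (sub_nonpos.2 (hhigh k (Finset.mem_Ico.1 hk).1)), mul_neg]
  rw [← Finset.sum_range_add_sum_Ico _ hjm] at htotal ⊢
  linarith

end TwoPointWalk

section CyclicLead

theorem forall_fin_three_iff_from (c : Fin 3) {P : Fin 3 → Prop} :
    (∀ i, P i) ↔ P c ∧ P (c + 1) ∧ P (c + 2) := by
  fin_cases c <;> simp only [Fin.forall_fin_succ, IsEmpty.forall_iff] <;> tauto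

theorem sum_fin_three_eq_from {M : Type*} [AddCommMonoid M] (c : Fin 3) (g : Fin 3 → M) :
    ∑ i, g i = g c + g (c + 1) + g (c + 2) := by
  rw [← Fintype.sum_equiv (Equiv.addLeft c) _ g fun _ => rfl, Fin.sum_univ_three]
  simp

/-- The averaging operator of the walk on `ℝ³` which increments a uniformly chosen coordinate:
the moves of a player who chooses uniformly and without restriction. -/
noncomputable def freeMove : Module.End ℝ ((Fin 3 → ℝ) → ℝ) :=
  walkStep fun i => Pi.single i 1

/-- The maximum of `x₀ - x₁`, `x₁ - x₂` and `x₂ - x₀`. It is the best score that a player repeating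
a single move from now on can gain against an opponent with move counts `x` who ends up using every
move equally often. -/
noncomputable def cyclicLead (x : Fin 3 → ℝ) : ℝ := ⨆ i, (x i - x (i + 1))

/-- The quadratic companion of `cyclicLead`, which grows by exactly `2` on average per free
move. -/
noncomputable def cyclicEnergy (x : Fin 3 → ℝ) : ℝ := ∑ i, (x i - x (i + 1)) ^ 2

theorem cyclicLead_le_iff {x : Fin 3 → ℝ} {a : ℝ} :
    cyclicLead x ≤ a ↔ ∀ i, x i - x (i + 1) ≤ a :=
  ciSup_le_iff (Set.finite_range _).bddAbove

theorem sub_le_cyclicLead (x : Fin 3 → ℝ) (i : Fin 3) : x i - x (i + 1) ≤ cyclicLead x :=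
  cyclicLead_le_iff.1 le_rfl i

theorem cyclicLead_eq_max (c : Fin 3) (x : Fin 3 → ℝ) :
    cyclicLead x = max (x c - x (c + 1)) (max (x (c + 1) - x (c + 2)) (x (c + 2) - x c)) := by
  refine eq_of_forall_ge_iff fun a => ?_
  rw [cyclicLead_le_iff, forall_fin_three_iff_from c, max_le_iff, max_le_iff]
  simp [add_assoc]

theorem cyclicLead_add_le (x y : Fin 3 → ℝ) :
    cyclicLead (x + y) ≤ cyclicLead x + cyclicLead y :=
  cyclicLead_le_iff.2 fun i => by
    have hx := sub_le_cyclicLead x i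
    have hy := sub_le_cyclicLead y i
    simp only [Pi.add_apply]
    linarith

theorem sq_cyclicLead_le_cyclicEnergy (x : Fin 3 → ℝ) : cyclicLead x ^ 2 ≤ cyclicEnergy x := by
  obtain ⟨i, hi⟩ := exists_eq_ciSup_of_finite (f := fun i => x i - x (i + 1))
  rw [cyclicLead, ← hi]
  exact Finset.single_le_sum (f := fun i => (x i - x (i + 1)) ^ 2) (fun _ _ => sq_nonneg _)
    (Finset.mem_univ i)

theorem freeMove_cyclicEnergy (x : Fin 3 → ℝ) :
    freeMove cyclicEnergy x = cyclicEnergy x + 2 := by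
  simp only [freeMove, walkStep_apply, cyclicEnergy, Fintype.expect_eq_sum_div_card,
    Fin.sum_univ_three, Pi.add_apply, Pi.single_apply, Fin.isValue, Fin.reduceAdd, Fin.reduceEq,
    zero_add, add_zero, one_ne_zero, zero_ne_one, ↓reduceIte, Fintype.card_fin, Nat.cast_ofNat]
  ring

theorem cyclicLead_le_freeMove : cyclicLead ≤ freeMove cyclicLead := fun x =>
  cyclicLead_le_iff.2 fun i => by
    have hmean : x i - x (i + 1) =
        freeMove (fun y => y i - y (i + 1)) x := by
      simp [freeMove, walkStep_apply, Pi.single_apply, Finset.expect_sub_distrib,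
        Finset.expect_add_distrib]
    rw [hmean]
    exact Finset.expect_le_expect fun j _ => sub_le_cyclicLead _ i

theorem cyclicLead_le_freeMove_pow (m : ℕ) : cyclicLead ≤ (freeMove ^ m) cyclicLead :=
  le_walkStep_pow_of_le_walkStep _ cyclicLead_le_freeMove m

theorem freeMove_pow_cyclicLead_zero_le (m : ℕ) : (freeMove ^ m) cyclicLead 0 ≤ √(2 * m) := by
  refine Real.le_sqrt_of_sq_le ?_
  calc (freeMove ^ m) cyclicLead 0 ^ 2
      ≤ (freeMove ^ m) (cyclicLead ^ 2) 0 := sq_walkStep_pow_le _ m _ _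
    _ ≤ (freeMove ^ m) cyclicEnergy 0 := walkStep_pow_mono _ m sq_cyclicLead_le_cyclicEnergy 0
    _ = cyclicEnergy 0 + m * 2 :=
        walkStep_pow_of_walkStep_eq_add_const _ freeMove_cyclicEnergy m 0
    _ = 2 * m := by simp [cyclicEnergy, mul_comm]

theorem freeMove_pow_cyclicLead_le (m : ℕ) (x : Fin 3 → ℝ) :
    (freeMove ^ m) cyclicLead x ≤ cyclicLead x + √(2 * m) := by
  have h := walkStep_pow_apply_add_le (fun i => Pi.single i 1) cyclicLead_add_le m x 0
  rw [add_zero] at h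
  exact h.trans (add_le_add_right (freeMove_pow_cyclicLead_zero_le m) _)

end CyclicLead

section ExpectedLead

/-- The deviation of the count of the move `i` from the mean count, scaled by `-3` to keep it
integral. -/
noncomputable def centredCount (i : Fin 3) : (Fin 3 → ℝ) →+ ℝ where
  toFun x := ∑ j, x j - 3 * x i
  map_zero' := by simp
  map_add' x y := by simp only [Pi.add_apply, Finset.sum_add_distrib]; ring

theorem centredCount_apply (i : Fin 3) (x : Fin 3 → ℝ) :
    centredCount i x = ∑ j, x j - 3 * x i := rfl

theorem max_sub_min_three (a b c : ℝ) :
    max a (max b c) - min a (min b c) = (|a - b| + |b - c| + |c - a|) / 2 := by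
  rcases le_total a b with hab | hab <;> rcases le_total b c with hbc | hbc <;>
    rcases le_total c a with hca | hca <;>
    simp [*, abs_of_nonneg, abs_of_nonpos] <;> linarith

/-- Exchanging two moves replaces the three cyclic differences by their negatives, so the left-hand
side is their range. -/
theorem cyclicLead_add_cyclicLead_swap (x : Fin 3 → ℝ) :
    cyclicLead x + cyclicLead (x ∘ Equiv.swap 0 1) = (∑ i, |centredCount i x|) / 2 := by
  set a := x 0 - x 1 with ha
  set b := x 1 - x 2 with hb
  set c := x 2 - x 0 with hc
  have hforward : cyclicLead x = max a (max b c) := cyclicLead_eq_max 0 x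
  have hbackward : cyclicLead (x ∘ Equiv.swap 0 1) = -min a (min b c) := by
    rw [cyclicLead_eq_max 0, min_comm b c, ← max_neg_neg, ← max_neg_neg, ha, hb, hc]
    simp [Equiv.swap_apply_def]
  have hcounts : ∑ i, |centredCount i x| = |a - b| + |b - c| + |c - a| := by
    have h0 : centredCount 0 x = c - a := by
      rw [centredCount_apply, Fin.sum_univ_three]; ring
    have h1 : centredCount 1 x = a - b := by
      rw [centredCount_apply, Fin.sum_univ_three]; ring
    have h2 : centredCount 2 x = b - c := by
      rw [centredCount_apply, Fin.sum_univ_three]; ring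
    rw [Fin.sum_univ_three, h0, h1, h2]
    ring
  rw [hforward, hbackward, hcounts, ← sub_eq_add_neg, max_sub_min_three]

theorem walkStep_centredCount_single (i : Fin 3) :
    walkStep (fun j => centredCount i (Pi.single j 1)) =
      (1 / 3 : ℝ) • LinearMap.funLeft ℝ ℝ (· + (-2 : ℝ)) +
        (2 / 3 : ℝ) • LinearMap.funLeft ℝ ℝ (· + (1 : ℝ)) := by
  ext f x
  have h (j : Fin 3) : centredCount i (Pi.single j 1) = if j = i then -2 else 1 := by
    rw [centredCount_apply]
    simp only [Pi.single_apply, eq_comm, Finset.sum_ite_eq, Finset.mem_univ, ↓reduceIte]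
    split_ifs <;> norm_num
  simp only [walkStep_apply, h, Fintype.expect_eq_sum_div_card, sum_fin_three_eq_from i,
    LinearMap.add_apply, LinearMap.smul_apply, LinearMap.funLeft_apply, Pi.add_apply, Pi.smul_apply,
    smul_eq_mul, ↓reduceIte, add_eq_left, one_ne_zero, Fin.isValue, Fin.reduceEq, Fintype.card_fin,
    Nat.cast_ofNat]
  ring

theorem freeMove_pow_abs_centredCount (i : Fin 3) (n : ℕ) :
    (freeMove ^ (3 * n)) (abs ∘ centredCount i) 0 =
      4 * n * (3 * n).choose n * 4 ^ n / 27 ^ n := by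
  rw [freeMove, walkStep_pow_comp_addMonoidHom, Function.comp_def, walkStep_centredCount_single,
    map_zero, smul_add_smul_funLeft_pow_apply]
  have hmoivre := sum_range_choose_mul_pow_mul_abs_sub (p := 1 / 3) (q := 2 / 3) (by norm_num)
    (m := 3 * n) (j := n) (by lia)
    (fun k hk => by push_cast; linarith [(Nat.cast_lt (α := ℝ)).2 hk])
    (fun k hk => by push_cast; linarith [(Nat.cast_le (α := ℝ)).2 hk])
  have hposition : ∀ k ∈ Finset.range (3 * n + 1),
      |(0 : ℝ) + k • (-2) + (3 * n - k) • 1| = 3 * |((3 * n : ℕ) : ℝ) * (1 / 3) - k| := by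
    intro k hk
    have hk' : k ≤ 3 * n := Nat.lt_succ_iff.1 (Finset.mem_range.1 hk)
    rw [← abs_of_pos (three_pos : (0 : ℝ) < 3), ← abs_mul, abs_of_pos (three_pos : (0 : ℝ) < 3)]
    congr 1
    rw [nsmul_eq_mul, nsmul_eq_mul]
    push_cast [hk']
    ring
  have hweight : (1 / 3 : ℝ) ^ n * (2 / 3) ^ (3 * n + 1 - n) = 2 / 3 * (4 ^ n / 27 ^ n) := by
    rw [show 3 * n + 1 - n = 2 * n + 1 by lia, pow_succ, pow_mul, ← mul_assoc, ← mul_pow, ← div_pow,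
      mul_comm]
    norm_num
  rw [Finset.sum_congr rfl fun k hk => by rw [hposition k hk, mul_left_comm], ← Finset.mul_sum,
    hmoivre]
  linear_combination (6 * n * (3 * n).choose n) * hweight

theorem freeMove_pow_cyclicLead_zero (n : ℕ) :
    (freeMove ^ (3 * n)) cyclicLead 0 = 3 * n * (3 * n).choose n * 4 ^ n / 27 ^ n := by
  set swap : (Fin 3 → ℝ) →+ (Fin 3 → ℝ) :=
    (LinearMap.funLeft ℝ ℝ (Equiv.swap (0 : Fin 3) 1)).toAddMonoidHom
  have hswap : (freeMove ^ (3 * n)) (cyclicLead ∘ swap) 0 = (freeMove ^ (3 * n)) cyclicLead 0 := by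
    have hsteps : swap ∘ (fun i : Fin 3 => Pi.single i (1 : ℝ)) =
        (fun i : Fin 3 => Pi.single i 1) ∘ Equiv.swap 0 1 := by
      ext i j
      simp [swap, Pi.single_apply, Equiv.swap_apply_eq_iff]
    rw [freeMove, walkStep_pow_comp_addMonoidHom, hsteps, walkStep_comp_equiv, map_zero]
  have hsum : cyclicLead + cyclicLead ∘ swap = (1 / 2 : ℝ) • ∑ i, abs ∘ centredCount i := by
    ext x
    simpa [div_eq_inv_mul] using! cyclicLead_add_cyclicLead_swap x
  have h := congrFun (congrArg (freeMove ^ (3 * n)) hsum) 0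
  simp only [map_add, map_smul, map_sum, Pi.add_apply, Pi.smul_apply, Finset.sum_apply, hswap,
    freeMove_pow_abs_centredCount, Finset.sum_const, Finset.card_univ, Fintype.card_fin,
    nsmul_eq_mul, smul_eq_mul] at h
  push_cast at h
  linear_combination h / 2

end ExpectedLead

section Stirling

open Asymptotics

theorem choose_mul_isEquivalent {a b : ℕ} (ha : 0 < a) (hb : 0 < b) :
    (fun n : ℕ => (((a + b) * n).choose (a * n) : ℝ)) ~[atTop] fun n =>
      √((a + b) / (2 * π * a * b * n)) * ((a + b) ^ (a + b) / (a ^ a * b ^ b)) ^ n := by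
  have hfactorial {k : ℕ} (hk : 0 < k) := Stirling.factorial_isEquivalent_stirling.comp_tendsto
    (tendsto_id.const_mul_atTop' hk)
  refine (((hfactorial (Nat.add_pos_left ha b)).div
    ((hfactorial ha).mul (hfactorial hb))).congr_right ?_).congr_left (.of_forall fun n => ?_)
  · filter_upwards [eventually_gt_atTop 0] with n hn
    have hsqrt : √(2 * ((a + b) * n) * π) / (√(2 * (a * n) * π) * √(2 * (b * n) * π)) =
        √((a + b) / (2 * π * a * b * n)) := by
      rw [← Real.sqrt_mul (by positivity), ← Real.sqrt_div (by positivity)]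
      congr 1
      field_simp
    have hpow (k : ℕ) : (k * n / Real.exp 1) ^ (k * n) =
        ((k : ℝ) ^ k) ^ n * ((n / Real.exp 1) ^ n) ^ k := by
      rw [mul_div_assoc, mul_pow, pow_mul, pow_mul']
    have hbase : (n / Real.exp 1) ^ n ≠ 0 := by positivity
    simp only [Pi.div_apply, Pi.mul_apply, Function.comp_apply, id_eq, Nat.cast_mul, hpow]
    generalize (n / Real.exp 1) ^ n = u at hbase ⊢
    push_cast
    rw [← hsqrt, div_pow, mul_pow, pow_add u a b]
    field_simp
  · simp [add_mul, Nat.cast_add_choose]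

theorem tendsto_choose_three_mul_div_sqrt :
    Tendsto (fun n : ℕ => 3 * n * (3 * n).choose n * 4 ^ n / 27 ^ n / √n) atTop
      (𝓝 (3 * √3 / (2 * √π))) := by
  have hchoose := choose_mul_isEquivalent one_pos two_pos
  have h := hchoose.mul (IsEquivalent.refl (u := fun n : ℕ => 3 * √n * (4 / 27) ^ n))
  refine ((h.congr_right ?_).congr_left ?_).tendsto_const
  · filter_upwards [eventually_gt_atTop 0] with n hn
    have hpow : (((1 : ℝ) + 2) ^ (1 + 2) / (1 ^ 1 * 2 ^ 2)) ^ n * (4 / 27) ^ n = 1 := by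
      rw [← mul_pow]
      norm_num
    have hsqrt : √((1 + 2) / (2 * π * 1 * 2 * n)) * √n = √3 / (2 * √π) := by
      rw [← Real.sqrt_mul (by positivity),
        show (1 + 2) / (2 * π * 1 * 2 * n) * n = 3 / (2 ^ 2 * π) by field_simp; norm_num,
        Real.sqrt_div zero_le_three, Real.sqrt_mul (by positivity), Real.sqrt_sq zero_le_two]
    simp only [Pi.mul_apply, Nat.cast_one, Nat.cast_ofNat, Function.const_apply]
    linear_combination 3 * (√3 / (2 * √π)) * hpow +
      3 * (((1 : ℝ) + 2) ^ (1 + 2) / (1 ^ 1 * 2 ^ 2)) ^ n * (4 / 27) ^ n * hsqrt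
  · filter_upwards [eventually_gt_atTop 0] with n hn
    have hn' : √(n : ℝ) ^ 2 = n := Real.sq_sqrt n.cast_nonneg
    simp only [Pi.mul_apply, one_mul, Nat.reduceAdd, div_pow]
    field_simp
    rw [hn']

end Stirling

section StepMean

variable {n : ℕ} {N : Fin 3 → ℕ} {p q : (Fin 3 → ℕ) × ℤ}

theorem e_eq_single (i : Fin 3) : e i = Pi.single i 1 := by
  ext j
  simp [e, Pi.single_apply]

theorem e_injective : Function.Injective e := fun i j h => by
  simpa [e] using congrFun h i

theorem natCast_add_e (N : Fin 3 → ℕ) (i : Fin 3) :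
    (fun j => ((N + e i) j : ℝ)) = (fun j => (N j : ℝ)) + Pi.single i 1 := by
  ext j
  simp [e_eq_single, Pi.single_apply]

theorem sum_add_e (N : Fin 3 → ℕ) (i : Fin 3) : ∑ j, (N + e i) j = ∑ j, N j + 1 := by
  simp [e, Finset.sum_add_distrib]

theorem add_e_le {i : Fin 3} (hN : ∀ j, N j ≤ n) (hi : N i ≠ n) (j : Fin 3) :
    (N + e i) j ≤ n := by
  obtain rfl | hj := eq_or_ne j i
  · simpa [e] using (hN j).lt_of_ne hi
  · simpa [e, hj] using hN j

theorem card_filter_eq_from (c : Fin 3) (N : Fin 3 → ℕ) :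
    (Finset.univ.filter fun i => N i = n).card =
      (if N c = n then 1 else 0) + (if N (c + 1) = n then 1 else 0) +
        (if N (c + 2) = n then 1 else 0) := by
  rw [Finset.card_filter, sum_fin_three_eq_from c]

theorem no_full_or_one_full_or_two_full (hN : ∀ i, N i ≤ n) (hlt : ∃ i, N i < n) :
    (∀ i, N i ≠ n) ∨ (∃ c, N c = n ∧ N (c + 1) ≠ n ∧ N (c + 2) ≠ n) ∨
      ∃ c, N c < n ∧ N (c + 1) = n ∧ N (c + 2) = n := by
  by_cases hfull : ∀ i, N i ≠ n
  · exact .inl hfull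
  obtain ⟨c, hc⟩ := not_forall_not.1 hfull
  rw [← not_forall_not, forall_fin_three_iff_from c] at hlt
  by_cases h1 : N (c + 1) = n <;> by_cases h2 : N (c + 2) = n
  · simp [hc, h1, h2] at hlt
  · exact .inr <| .inr ⟨c + 2, (hN _).lt_of_ne h2, by simpa [add_assoc], by simpa [add_assoc]⟩
  · exact .inr <| .inr ⟨c + 1, (hN _).lt_of_ne h1, by simpa [add_assoc], by simpa [add_assoc]⟩
  · exact .inr <| .inl ⟨c, hc, h1, h2⟩

theorem stepProb_of_no_full (h : ∀ i, p.1 i ≠ n) : stepProb n p q =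
    if (∃ i, q.1 = p.1 + e i) ∧ (q.2 = p.2 - 1 ∨ q.2 = p.2 ∨ q.2 = p.2 + 1) then 1 / 9 else 0 := by
  simp only [stepProb, h, Finset.filter_false, Finset.card_empty, ↓reduceIte]

theorem stepProb_of_one_full {c : Fin 3} (hc : p.1 c = n) (h1 : p.1 (c + 1) ≠ n)
    (h2 : p.1 (c + 2) ≠ n) : stepProb n p q =
    if q.1 = p.1 + e (c + 1) ∧ q.2 = p.2 + 1 then 2 / 9
    else if q.1 = p.1 + e (c + 1) ∧ q.2 = p.2 - 1 then 1 / 9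
    else if q.1 = p.1 + e (c + 2) ∧ q.2 = p.2 then 4 / 9
    else if q.1 = p.1 + e (c + 2) ∧ q.2 = p.2 + 1 then 2 / 9
    else 0 := by
  simp only [stepProb, card_filter_eq_from c, sum_fin_three_eq_from c, hc, h1, h2, ↓reduceIte,
    add_zero, one_ne_zero]

theorem stepProb_of_two_full {c : Fin 3} (hc : p.1 c < n) (h1 : p.1 (c + 1) = n)
    (h2 : p.1 (c + 2) = n) : stepProb n p q =
    if q.1 = p.1 + e c ∧ q.2 = p.2 + 1 then 1 else 0 := by
  have hfree (i : Fin 3) : p.1 i < n ↔ i = c := by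
    revert i
    rw [forall_fin_three_iff_from c]
    simp [hc, h1, h2]
  simp [stepProb, card_filter_eq_from c, hc.ne, h1, h2, hfree]

theorem exists_move_of_stepProb_ne_zero (h : stepProb n p q ≠ 0) :
    ∃ (i : Fin 3) (d : SignType), p.1 i ≠ n ∧ q = (p.1 + e i, p.2 + (d : ℤ)) := by
  suffices ∃ i, p.1 i ≠ n ∧ q.1 = p.1 + e i ∧ (q.2 = p.2 - 1 ∨ q.2 = p.2 ∨ q.2 = p.2 + 1) by
    obtain ⟨i, hi, hq, hscore⟩ := this
    obtain hscore | hscore | hscore := hscore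
    · exact ⟨i, -1, hi, Prod.ext hq (by simpa [sub_eq_add_neg] using hscore)⟩
    · exact ⟨i, 0, hi, Prod.ext hq (by simpa using hscore)⟩
    · exact ⟨i, 1, hi, Prod.ext hq (by simpa using hscore)⟩
  dsimp only [stepProb] at h
  split_ifs at h with hcard hmove hcard hcard hmove
  · obtain ⟨⟨i, hi⟩, hscore⟩ := hmove
    exact ⟨i, fun hin => Finset.filter_eq_empty_iff.1 (Finset.card_eq_zero.1 hcard)
      (Finset.mem_univ i) hin, hi, hscore⟩
  · exact absurd rfl h
  · obtain ⟨c, -, hc⟩ := Finset.exists_ne_zero_of_sum_ne_zero h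
    have hfull : p.1 c = n := by
      by_contra hfull
      simp [hfull] at hc
    rw [card_filter_eq_from c] at hcard
    have h1 : p.1 (c + 1) ≠ n := fun h1 => by simp only [hfull, h1, ↓reduceIte] at hcard; lia
    have h2 : p.1 (c + 2) ≠ n := fun h2 => by simp only [hfull, h2, ↓reduceIte] at hcard; lia
    rw [if_pos hfull] at hc
    split_ifs at hc with hmove hmove hmove hmove
    · exact ⟨c + 1, h1, hmove.1, by simp [hmove.2]⟩
    · exact ⟨c + 1, h1, hmove.1, by simp [hmove.2]⟩
    · exact ⟨c + 2, h2, hmove.1, by simp [hmove.2]⟩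
    · exact ⟨c + 2, h2, hmove.1, by simp [hmove.2]⟩
    · exact absurd rfl hc
  · obtain ⟨i, hi, hq, hscore⟩ := hmove
    exact ⟨i, hi.ne, hq, .inr (.inr hscore)⟩
  · exact absurd rfl h
  · exact absurd rfl h

/-- The expectation of `g` after one transition of the greedy game process from the state `p`. -/
noncomputable def stepMean (n : ℕ) (g : (Fin 3 → ℕ) × ℤ → ℝ) (p : (Fin 3 → ℕ) × ℤ) : ℝ :=
  ∑' q, (stepProb n p q).toReal * g q

theorem stepMean_eq_sum (n : ℕ) (g : (Fin 3 → ℕ) × ℤ → ℝ) (p : (Fin 3 → ℕ) × ℤ) :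
    stepMean n g p =
      ∑ i, ((stepProb n p (p.1 + e i, p.2 - 1)).toReal * g (p.1 + e i, p.2 - 1) +
        (stepProb n p (p.1 + e i, p.2)).toReal * g (p.1 + e i, p.2) +
        (stepProb n p (p.1 + e i, p.2 + 1)).toReal * g (p.1 + e i, p.2 + 1)) := by
  set move : Fin 3 × SignType → (Fin 3 → ℕ) × ℤ := fun m => (p.1 + e m.1, p.2 + (m.2 : ℤ))
  have hscore : Function.Injective ((↑) : SignType → ℤ) := by decide
  have hmove : Function.Injective move := fun a b h => by
    obtain ⟨h1, h2⟩ := Prod.mk.inj h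
    exact Prod.ext (e_injective (add_left_cancel h1))
      (hscore (add_left_cancel h2))
  rw [stepMean, ← Function.Injective.tsum_eq hmove, tsum_fintype, Fintype.sum_prod_type]
  · refine Finset.sum_congr rfl fun i _ => ?_
    rw [SignType.univ_eq, Finset.sum_insert (by decide), Finset.sum_pair (by decide),
      add_left_comm, ← add_assoc]
    simp [move, sub_eq_add_neg]
  intro q hq
  obtain ⟨i, d, -, rfl⟩ := exists_move_of_stepProb_ne_zero (n := n) (p := p) (q := q) fun h =>
    hq (by simp [h])
  exact ⟨(i, d), rfl⟩

theorem stepMean_of_no_full (g : (Fin 3 → ℕ) × ℤ → ℝ) (h : ∀ i, p.1 i ≠ n) :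
    stepMean n g p =
      (∑ i, (g (p.1 + e i, p.2 - 1) + g (p.1 + e i, p.2) + g (p.1 + e i, p.2 + 1))) / 9 := by
  rw [stepMean_eq_sum, Finset.sum_div]
  refine Finset.sum_congr rfl fun i _ => ?_
  simp only [stepProb_of_no_full h, add_right_inj, exists_apply_eq_apply', true_or, or_true,
    and_true, ↓reduceIte, ENNReal.toReal_div, ENNReal.toReal_one, ENNReal.toReal_ofNat]
  ring

theorem stepMean_of_one_full (g : (Fin 3 → ℕ) × ℤ → ℝ) {c : Fin 3} (hc : p.1 c = n)
    (h1 : p.1 (c + 1) ≠ n) (h2 : p.1 (c + 2) ≠ n) :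
    stepMean n g p = 2 / 9 * g (p.1 + e (c + 1), p.2 + 1) + 1 / 9 * g (p.1 + e (c + 1), p.2 - 1) +
      4 / 9 * g (p.1 + e (c + 2), p.2) + 2 / 9 * g (p.1 + e (c + 2), p.2 + 1) := by
  have hne : p.2 - 1 ≠ p.2 + 1 := by lia
  simp only [stepMean_eq_sum, stepProb_of_one_full hc h1 h2, sum_fin_three_eq_from c, Fin.isValue,
    add_right_inj, e_injective.eq_iff, Fin.reduceEq, add_eq_left, left_eq_add, sub_eq_self,
    one_ne_zero, hne, (sub_one_lt p.2).ne', and_true, and_false, false_and, ↓reduceIte,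
    ENNReal.toReal_div, ENNReal.toReal_zero, ENNReal.toReal_one, ENNReal.toReal_ofNat]
  ring

theorem stepMean_of_two_full (g : (Fin 3 → ℕ) × ℤ → ℝ) {c : Fin 3} (hc : p.1 c < n)
    (h1 : p.1 (c + 1) = n) (h2 : p.1 (c + 2) = n) :
    stepMean n g p = g (p.1 + e c, p.2 + 1) := by
  have hne : p.2 - 1 ≠ p.2 + 1 := by lia
  simp [stepMean_eq_sum, stepProb_of_two_full hc h1 h2, sum_fin_three_eq_from c,
    e_injective.eq_iff, hne]

end StepMean

section ExpectedGain

open scoped BigOperators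

variable {n m : ℕ} {N : Fin 3 → ℕ} {c : Fin 3}

/-- The expected score still to be gained in `m` further rounds of the greedy game process by a
player whose opponent has move counts `N`. -/
noncomputable def expectedGain (n : ℕ) : ℕ → (Fin 3 → ℕ) → ℝ
  | 0, _ => 0
  | m + 1, N => stepMean n (fun q => q.2 + expectedGain n m q.1) (N, 0)

theorem expectedGain_succ_of_no_full (h : ∀ i, N i ≠ n) :
    expectedGain n (m + 1) N = (∑ i, expectedGain n m (N + e i)) / 3 := by
  rw [expectedGain, stepMean_of_no_full _ h, Finset.sum_div, Finset.sum_div]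
  refine Finset.sum_congr rfl fun i _ => ?_
  push_cast
  ring

theorem expectedGain_succ_of_one_full (hc : N c = n) (h1 : N (c + 1) ≠ n) (h2 : N (c + 2) ≠ n) :
    expectedGain n (m + 1) N =
      1 / 3 + 1 / 3 * expectedGain n m (N + e (c + 1)) +
        2 / 3 * expectedGain n m (N + e (c + 2)) := by
  rw [expectedGain, stepMean_of_one_full _ hc h1 h2]
  push_cast
  ring

theorem expectedGain_succ_of_two_full (hc : N c < n) (h1 : N (c + 1) = n) (h2 : N (c + 2) = n) :
    expectedGain n (m + 1) N = 1 + expectedGain n m (N + e c) := by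
  rw [expectedGain, stepMean_of_two_full _ hc h1 h2]
  push_cast
  ring

theorem stepMean_add_expectedGain {p : (Fin 3 → ℕ) × ℤ} (hp : ∀ i, p.1 i ≤ n)
    (hlt : ∃ i, p.1 i < n) (m : ℕ) :
    stepMean n (fun q => q.2 + expectedGain n m q.1) p = p.2 + expectedGain n (m + 1) p.1 := by
  obtain h | ⟨c, hc, h1, h2⟩ | ⟨c, hc, h1, h2⟩ := no_full_or_one_full_or_two_full hp hlt
  · rw [expectedGain_succ_of_no_full h, stepMean_of_no_full _ h]
    simp only [Finset.sum_add_distrib, Finset.sum_const, Finset.card_univ, Fintype.card_fin,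
      nsmul_eq_mul]
    push_cast
    ring
  · rw [expectedGain_succ_of_one_full hc h1 h2, stepMean_of_one_full _ hc h1 h2]
    push_cast
    ring
  · rw [expectedGain_succ_of_two_full hc h1 h2, stepMean_of_two_full _ hc h1 h2]
    push_cast
    ring

theorem expectedGain_of_two_full (hm : N c + m = n) (h1 : N (c + 1) = n) (h2 : N (c + 2) = n) :
    expectedGain n m N = m := by
  induction m generalizing N with
  | zero => simp [expectedGain]
  | succ m ih =>
    rw [expectedGain_succ_of_two_full (by lia) h1 h2, ih]
    · push_cast
      ring
    · simp [e]
      lia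
    · simpa [e]
    · simpa [e]

theorem expectedGain_of_full_of_other_full (hc : N c = n) (h : N (c + 1) = n ∨ N (c + 2) = n)
    (hm : N (c + 1) + N (c + 2) + m = 2 * n) : expectedGain n m N = m := by
  obtain h | h := h
  · exact expectedGain_of_two_full (c := c + 2) (by lia) (by simpa [add_assoc])
      (by simpa [add_assoc])
  · exact expectedGain_of_two_full (c := c + 1) (by lia) (by simpa [add_assoc])
      (by simpa [add_assoc])

/-- While one move of the opponent is exhausted and `x`, `y` of the other two are left, both
`x - y / 2` and the expected gain minus `y / 2` are martingales, and the square of the former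
grows by `1 / 2` on average per round. -/
theorem expectedGain_sub_bounds (hc : N c = n) (h1 : N (c + 1) ≤ n) (h2 : N (c + 2) ≤ n)
    (hm : N (c + 1) + N (c + 2) + m = 2 * n) :
    |((n : ℝ) - N (c + 1)) - (n - N (c + 2)) / 2| ≤ expectedGain n m N - (n - N (c + 2)) / 2 ∧
      (expectedGain n m N - (n - N (c + 2)) / 2) ^ 2 ≤
        (((n : ℝ) - N (c + 1)) - (n - N (c + 2)) / 2) ^ 2 + m / 2 := by
  induction m generalizing N with
  | zero =>
    have h1' : N (c + 1) = n := by lia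
    have h2' : N (c + 2) = n := by lia
    simp [expectedGain, h1', h2']
  | succ m ih =>
    by_cases hfull : N (c + 1) = n ∨ N (c + 2) = n
    · have hx : (N (c + 1) : ℝ) ≤ n := mod_cast h1
      have hy : (N (c + 2) : ℝ) ≤ n := mod_cast h2
      have hxy : ((n : ℝ) - N (c + 1)) * (n - N (c + 2)) = 0 := by
        obtain h | h := hfull <;> simp [h]
      have hm' : ((m + 1 : ℕ) : ℝ) = 2 * n - N (c + 1) - N (c + 2) := by
        rw [← Nat.cast_two, ← Nat.cast_mul, ← hm]
        push_cast
        ring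
      rw [expectedGain_of_full_of_other_full hc hfull hm, hm', abs_le]
      exact ⟨⟨by linarith, by linarith⟩, by linarith⟩
    · rw [not_or] at hfull
      rw [expectedGain_succ_of_one_full hc hfull.1 hfull.2]
      have hih1 := ih (N := N + e (c + 1)) (by simpa [e])
      have hih2 := ih (N := N + e (c + 2)) (by simpa [e])
      simp only [e, Pi.add_apply, add_right_inj, Fin.isValue, Fin.reduceEq, ↓reduceIte,
        add_zero] at hih1 hih2
      obtain ⟨hlow1, hsq1⟩ := hih1 (by lia) h2 (by lia)
      obtain ⟨hlow2, hsq2⟩ := hih2 h1 (by lia) (by lia)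
      push_cast at *
      rw [abs_le] at *
      refine ⟨⟨by linarith, by linarith⟩, ?_⟩
      linarith [sq_nonneg (expectedGain n m (N + e (c + 1)) -
        expectedGain n m (N + e (c + 2)) - 1 / 2)]

theorem cyclicLead_natCast_of_full (hc : N c = n) (h2 : N (c + 2) ≤ n) :
    cyclicLead (fun i => (N i : ℝ)) =
      (n - N (c + 2)) / 2 + |((n : ℝ) - N (c + 1)) - (n - N (c + 2)) / 2| := by
  have hy : (N (c + 2) : ℝ) ≤ n := mod_cast h2
  rw [cyclicLead_eq_max c, hc, ← max_assoc, max_eq_left]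
  · obtain h | h := le_total (n - N (c + 1) : ℝ) (N (c + 1) - N (c + 2))
    · rw [max_eq_right h, abs_of_nonpos (by linarith)]
      ring
    · rw [max_eq_left h, abs_of_nonneg (by linarith)]
      ring
  · rw [le_max_iff]
    by_contra! h
    linarith

theorem abs_expectedGain_sub_freeMove_le_sqrt (hN : ∀ i, N i ≤ n) (hc : N c = n)
    (hm : ∑ i, N i + m = 3 * n) :
    |expectedGain n m N - (freeMove ^ m) cyclicLead (fun i => (N i : ℝ))| ≤ √(2 * m) := by
  rw [sum_fin_three_eq_from c] at hm
  obtain ⟨hlow, hsq⟩ := expectedGain_sub_bounds (m := m) hc (hN (c + 1)) (hN _) (by lia)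
  have hlead := cyclicLead_natCast_of_full hc (hN (c + 2))
  have hupper : expectedGain n m N ≤ cyclicLead (fun i => (N i : ℝ)) + √(2 * m) := by
    rw [hlead, add_assoc, ← sub_le_iff_le_add']
    refine le_of_abs_le (abs_le_of_sq_le_sq ?_ (by positivity))
    rw [add_sq, sq_abs, Real.sq_sqrt (by positivity)]
    refine hsq.trans ?_
    rw [add_assoc, add_le_add_iff_left]
    refine le_add_of_nonneg_of_le (by positivity) ?_
    linarith [m.cast_nonneg (α := ℝ)]
  have hlow' := cyclicLead_le_freeMove_pow m fun i => (N i : ℝ)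
  have hupper' := freeMove_pow_cyclicLead_le m fun i => (N i : ℝ)
  rw [abs_sub_le_iff]
  constructor <;> linarith

theorem sqrt_le_add_sq_div_pow_three {a δ : ℝ} (ha : 0 ≤ a) (hδ : 0 < δ) :
    √a ≤ δ + a ^ 2 / δ ^ 3 := by
  obtain h | h := le_total (√a) δ
  · exact h.trans (le_add_of_nonneg_right (by positivity))
  · have hcube : √a * δ ^ 3 ≤ √a * √a ^ 3 := by gcongr
    have hfourth : √a * √a ^ 3 = a ^ 2 := by
      rw [← pow_succ', show 3 + 1 = 2 * 2 from rfl, pow_mul, Real.sq_sqrt ha]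
    rw [← le_div_iff₀ (by positivity), hfourth] at hcube
    linarith

theorem sq_le_two_mul_cyclicEnergy (hN : N c = n) (hm : ∑ i, N i + m = 3 * n) :
    (m : ℝ) ^ 2 ≤ 2 * cyclicEnergy (fun i => (N i : ℝ)) := by
  rw [sum_fin_three_eq_from c, hN] at hm
  have hm' : (n : ℝ) + N (c + 1) + N (c + 2) + m = 3 * n := mod_cast hm
  have hsplit : (m : ℝ) = (n - N (c + 1)) + (n - N (c + 2)) := by linarith
  have henergy : cyclicEnergy (fun i => (N i : ℝ)) = (n - N (c + 1) : ℝ) ^ 2 +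
      (N (c + 1) - N (c + 2) : ℝ) ^ 2 + (N (c + 2) - n : ℝ) ^ 2 := by
    rw [cyclicEnergy, sum_fin_three_eq_from c, hN]
    simp [add_assoc, hN]
  rw [henergy, hsplit]
  linarith [sq_nonneg ((N (c + 1) : ℝ) - N (c + 2))]

theorem abs_expectedGain_sub_freeMove_le_of_full (hN : ∀ i, N i ≤ n) (hc : N c = n)
    (hm : ∑ i, N i + m = 3 * n) {δ : ℝ} (hδ : 0 < δ) :
    |expectedGain n m N - (freeMove ^ m) cyclicLead (fun i => (N i : ℝ))| ≤
      δ + 8 / δ ^ 3 * (cyclicEnergy (fun i => (N i : ℝ)) + 2 * m) := by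
  calc |expectedGain n m N - (freeMove ^ m) cyclicLead (fun i => (N i : ℝ))|
      ≤ √(2 * m) := abs_expectedGain_sub_freeMove_le_sqrt hN hc hm
    _ ≤ δ + (2 * m) ^ 2 / δ ^ 3 := sqrt_le_add_sq_div_pow_three (by positivity) hδ
    _ = δ + 4 / δ ^ 3 * (m : ℝ) ^ 2 := by ring
    _ ≤ δ + 4 / δ ^ 3 * (2 * (cyclicEnergy (fun i => (N i : ℝ)) + 2 * m)) := by
        have henergy := sq_le_two_mul_cyclicEnergy hc hm
        gcongr
        linarith [m.cast_nonneg (α := ℝ)]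
    _ = δ + 8 / δ ^ 3 * (cyclicEnergy (fun i => (N i : ℝ)) + 2 * m) := by ring

/-- The comparison is easy once a move is exhausted, and the right-hand side is preserved on
average by a free move, so it propagates back to the earlier positions. -/
theorem abs_expectedGain_sub_freeMove_le (hN : ∀ i, N i ≤ n) (hm : ∑ i, N i + m = 3 * n) {δ : ℝ}
    (hδ : 0 < δ) :
    |expectedGain n m N - (freeMove ^ m) cyclicLead (fun i => (N i : ℝ))| ≤
      δ + 8 / δ ^ 3 * (cyclicEnergy (fun i => (N i : ℝ)) + 2 * m) := by
  induction m generalizing N with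
  | zero =>
    have hfull : N 0 = n := by
      rw [Fin.sum_univ_three] at hm
      linarith [hN 0, hN 1, hN 2]
    exact abs_expectedGain_sub_freeMove_le_of_full hN hfull hm hδ
  | succ m ih =>
    by_cases hfull : ∃ c, N c = n
    · obtain ⟨c, hc⟩ := hfull
      exact abs_expectedGain_sub_freeMove_le_of_full hN hc hm hδ
    rw [not_exists] at hfull
    set x : Fin 3 → ℝ := fun i => (N i : ℝ) with hx
    have hih (i : Fin 3) : |expectedGain n m (N + e i) -
        (freeMove ^ m) cyclicLead (x + Pi.single i 1)| ≤
          δ + 8 / δ ^ 3 * (cyclicEnergy (x + Pi.single i 1) + 2 * m) := by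
      rw [hx, ← natCast_add_e]
      exact ih (add_e_le hN (hfull i)) (by rw [sum_add_e]; lia)
    calc |expectedGain n (m + 1) N - (freeMove ^ (m + 1)) cyclicLead x|
        = |𝔼 i, (expectedGain n m (N + e i) -
            (freeMove ^ m) cyclicLead (x + Pi.single i 1))| := by
          rw [expectedGain_succ_of_no_full hfull, freeMove, walkStep_pow_succ_apply,
            Finset.expect_sub_distrib, Fintype.expect_eq_sum_div_card,
            Fintype.expect_eq_sum_div_card, Fintype.card_fin, Nat.cast_ofNat]
      _ ≤ 𝔼 i, |expectedGain n m (N + e i) -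
            (freeMove ^ m) cyclicLead (x + Pi.single i 1)| := Finset.abs_expect_le _ _
      _ ≤ 𝔼 i, (δ + 8 / δ ^ 3 * (cyclicEnergy (x + Pi.single i 1) + 2 * m)) :=
          Finset.expect_le_expect fun i _ => hih i
      _ = δ + 8 / δ ^ 3 * (freeMove cyclicEnergy x + 2 * m) := by
          simp only [Finset.expect_add_distrib, ← Finset.mul_expect, Fintype.expect_const,
            freeMove, walkStep_apply]
      _ = δ + 8 / δ ^ 3 * (cyclicEnergy x + 2 * (m + 1 : ℕ)) := by
          rw [freeMove_cyclicEnergy]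
          push_cast
          ring

theorem abs_expectedGain_zero_sub_le (n : ℕ) :
    |expectedGain n (3 * n) 0 - 3 * n * (3 * n).choose n * 4 ^ n / 27 ^ n| ≤ 49 * √√n := by
  obtain rfl | hn := n.eq_zero_or_pos
  · simp [expectedGain]
  set δ := √√(n : ℝ)
  have hδ_pos : 0 < δ := by positivity
  have hδ_pow : (n : ℝ) = δ ^ 4 := by
    rw [show 4 = 2 * 2 from rfl, pow_mul, Real.sq_sqrt (by positivity),
      Real.sq_sqrt (by positivity)]
  have h := abs_expectedGain_sub_freeMove_le (n := n) (N := 0) (m := 3 * n) (by simp) (by simp)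
    hδ_pos
  have hzero : (fun i => ((0 : Fin 3 → ℕ) i : ℝ)) = 0 := by simp [Pi.zero_def]
  rw [hzero, freeMove_pow_cyclicLead_zero] at h
  refine h.trans_eq ?_
  simp only [cyclicEnergy, Pi.zero_apply, sub_zero, ne_eq, OfNat.ofNat_ne_zero, not_false_eq_true,
    zero_pow, Finset.sum_const_zero, zero_add]
  push_cast
  rw [hδ_pow]
  field_simp
  norm_num

theorem tendsto_expectedGain_zero_div_sqrt :
    Tendsto (fun n : ℕ => expectedGain n (3 * n) 0 / √n) atTop (𝓝 (3 * √3 / (2 * √π))) := by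
  have hroot : Tendsto (fun n : ℕ => √√(n : ℝ)) atTop atTop :=
    Real.tendsto_sqrt_atTop.comp (Real.tendsto_sqrt_atTop.comp tendsto_natCast_atTop_atTop)
  have herror : Tendsto (fun n : ℕ =>
      (expectedGain n (3 * n) 0 - 3 * n * (3 * n).choose n * 4 ^ n / 27 ^ n) / √n) atTop (𝓝 0) := by
    refine squeeze_zero_norm (fun n => ?_) (by simpa using hroot.inv_tendsto_atTop.const_mul 49)
    rw [norm_div, Real.norm_of_nonneg (Real.sqrt_nonneg _), Real.norm_eq_abs,
      ← Real.sqrt_div_self, ← mul_div_assoc]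
    gcongr
    exact abs_expectedGain_zero_sub_le n
  simpa [sub_div] using herror.add tendsto_choose_three_mul_div_sqrt

end ExpectedGain

section OneStepLaw

variable {S Ω : Type*} [Countable S] [MeasurableSpace Ω] {μ : Measure Ω} {K : S → S → ℝ≥0∞}
  {X Y : Ω → S}

theorem ae_of_measure_preimage_eq_lintegral
    (hlaw : ∀ q, μ (Y ⁻¹' {q}) = ∫⁻ ω, K (X ω) q ∂μ) {P Q : S → Prop} (hP : ∀ᵐ ω ∂μ, P (X ω))
    (hPQ : ∀ p q, P p → K p q ≠ 0 → Q q) : ∀ᵐ ω ∂μ, Q (Y ω) := by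
  have hne (q : S) (hq : ¬ Q q) : ∀ᵐ ω ∂μ, Y ω ≠ q := by
    have hnull : ∫⁻ ω, K (X ω) q ∂μ = 0 :=
      lintegral_eq_zero_of_ae_eq_zero <| hP.mono fun ω hω =>
        not_not.1 fun hK => hq (hPQ _ _ hω hK)
    rw [← hlaw] at hnull
    exact measure_eq_zero_iff_ae_notMem.1 hnull
  filter_upwards [ae_all_iff.2 fun q => eventually_imp_distrib_left.2 (hne q)] with ω hω
  exact not_not.1 fun hQ => hω _ hQ rfl

variable [MeasurableSpace S] [MeasurableSingletonClass S]

theorem measure_preimage_succ_singleton {X : ℕ → Ω → S} (hX : ∀ u, Measurable (X u)) {t : ℕ}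
    (hstep : ∀ f : ℕ → S, μ {ω | ∀ u ≤ t + 1, X u ω = f u} =
      K (f t) (f (t + 1)) * μ {ω | ∀ u ≤ t, X u ω = f u}) (q : S) :
    μ (X (t + 1) ⁻¹' {q}) = ∫⁻ ω, K (X t ω) q ∂μ := by
  set past : Ω → Fin (t + 1) → S := fun ω u => X u ω
  have hpast : Measurable past := measurable_pi_lambda _ fun u => hX u
  have hpath (h : Fin (t + 1) → S) :
      μ (past ⁻¹' {h} ∩ X (t + 1) ⁻¹' {q}) = K (h (Fin.last t)) q * μ (past ⁻¹' {h}) := by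
    set f : ℕ → S := fun u => if hu : u < t + 1 then h ⟨u, hu⟩ else q
    have hf_last : f t = h (Fin.last t) := dif_pos t.lt_succ_self
    have hf_next : f (t + 1) = q := dif_neg (lt_irrefl _)
    have hf_past : {ω | ∀ u ≤ t, X u ω = f u} = past ⁻¹' {h} := by
      ext ω
      simp +contextual [past, f, funext_iff, Fin.forall_iff]
    have hf_path : {ω | ∀ u ≤ t + 1, X u ω = f u} = past ⁻¹' {h} ∩ X (t + 1) ⁻¹' {q} := by
      rw [← hf_past, ← hf_next]
      ext ω
      simp [Nat.le_succ_iff, or_imp, forall_and]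
    rw [← hf_last, ← hf_past, ← hf_next, ← hstep, hf_path, hf_next, hf_past]
  calc μ (X (t + 1) ⁻¹' {q})
      = ∑' h, μ (past ⁻¹' {h} ∩ X (t + 1) ⁻¹' {q}) := by
        have htotal := tsum_measure_preimage_singleton (μ := μ.restrict (X (t + 1) ⁻¹' {q}))
          Set.countable_univ (f := past) fun h _ => hpast (measurableSet_singleton h)
        rw [tsum_univ fun h => μ.restrict _ (past ⁻¹' {h}), Set.preimage_univ,
          Measure.restrict_apply_univ] at htotal
        simp only [← htotal, Measure.restrict_apply (hpast (measurableSet_singleton _))]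
    _ = ∑' h, K (h (Fin.last t)) q * μ.map past {h} := by
        simp only [hpath, Measure.map_apply hpast (measurableSet_singleton _)]
    _ = ∫⁻ h, K (h (Fin.last t)) q ∂(μ.map past) := (lintegral_countable' _).symm
    _ = ∫⁻ ω, K (X t ω) q ∂μ := lintegral_map (measurable_of_countable _) hpast

theorem integral_comp_eq_integral_tsum [IsFiniteMeasure μ] (hX : Measurable X) (hY : Measurable Y)
    (hlaw : ∀ q, μ (Y ⁻¹' {q}) = ∫⁻ ω, K (X ω) q ∂μ) {F : Set S} (hF : F.Finite)
    (hYF : ∀ᵐ ω ∂μ, Y ω ∈ F) (g : S → ℝ) :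
    ∫ ω, g (Y ω) ∂μ = ∫ ω, ∑' q, (K (X ω) q).toReal * g q ∂μ := by
  lift F to Finset S using hF
  have hK (q : S) : Measurable fun ω => K (X ω) q :=
    (measurable_of_countable fun p => K p q).comp hX
  have hfin (q : S) : ∫⁻ ω, K (X ω) q ∂μ ≠ ∞ := by
    rw [← hlaw]
    exact measure_ne_top _ _
  have hmean (q : S) : μ.real (Y ⁻¹' {q}) = ∫ ω, (K (X ω) q).toReal ∂μ := by
    rw [Measure.real, hlaw,
      integral_toReal (hK q).aemeasurable (ae_lt_top (hK q) (hfin q))]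
  have hnull : ∀ᵐ ω ∂μ, ∀ q ∉ F, K (X ω) q = 0 := by
    refine ae_all_iff.2 fun q => eventually_imp_distrib_left.2 fun hq => ?_
    refine (lintegral_eq_zero_iff (hK q)).1 ?_
    rw [← hlaw, measure_eq_zero_iff_ae_notMem]
    exact hYF.mono fun ω hω hYq => hq (hYq ▸ hω)
  calc ∫ ω, g (Y ω) ∂μ = ∫ q, g q ∂(μ.map Y) :=
        (integral_map hY.aemeasurable (measurable_of_countable g).aestronglyMeasurable).symm
    _ = ∫ q in F, g q ∂(μ.map Y) := by
        rw [Measure.restrict_eq_self_of_ae_mem]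
        exact (ae_map_iff hY.aemeasurable F.measurableSet).2 hYF
    _ = ∑ q ∈ F, ∫ ω, (K (X ω) q).toReal * g q ∂μ := by
        rw [setIntegral_finset _ .finset]
        refine Finset.sum_congr rfl fun q _ => ?_
        rw [map_measureReal_apply hY (measurableSet_singleton q), hmean, smul_eq_mul,
          integral_mul_const]
    _ = ∫ ω, ∑ q ∈ F, (K (X ω) q).toReal * g q ∂μ :=
        (integral_finsetSum _ fun q _ =>
          (integrable_toReal_of_lintegral_ne_top (hK q).aemeasurable (hfin q)).mul_const _).symm
    _ = ∫ ω, ∑' q, (K (X ω) q).toReal * g q ∂μ := by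
        refine integral_congr_ae (hnull.mono fun ω hω => ?_)
        exact (tsum_eq_sum fun q hq => by rw [hω q hq, ENNReal.toReal_zero, zero_mul]).symm

end OneStepLaw

section GreedyProcess

variable {n t : ℕ} {p q : (Fin 3 → ℕ) × ℤ}

/-- The bounds on the move counts and the score of the greedy game process after `t` rounds that
confine it to finitely many states. -/
def reachableStates (n t : ℕ) : Set ((Fin 3 → ℕ) × ℤ) :=
  {p | (∀ i, p.1 i ≤ n) ∧ ∑ i, p.1 i = t ∧ |p.2| ≤ t}

theorem finite_reachableStates (n t : ℕ) : (reachableStates n t).Finite :=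
  ((Set.finite_Icc (0 : Fin 3 → ℕ) fun _ => n).prod (Set.finite_Icc (-t : ℤ) t)).subset
    fun _ hp => ⟨⟨fun _ => Nat.zero_le _, hp.1⟩, abs_le.1 hp.2.2⟩

theorem mem_reachableStates_succ (hp : p ∈ reachableStates n t) (hpq : stepProb n p q ≠ 0) :
    q ∈ reachableStates n (t + 1) := by
  obtain ⟨i, d, hi, rfl⟩ := exists_move_of_stepProb_ne_zero hpq
  obtain ⟨hle, hsum, hscore⟩ := hp
  refine ⟨add_e_le hle hi, by rw [sum_add_e, hsum], ?_⟩
  have hd : |(d : ℤ)| ≤ 1 := by cases d <;> decide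
  push_cast
  exact (abs_add_le _ _).trans (add_le_add hscore hd)

variable {Ω : Type*} [MeasurableSpace Ω] {μ : Measure Ω} {NS : ℕ → Ω → (Fin 3 → ℕ) × ℤ}

namespace IsGreedyProcess

variable (h : IsGreedyProcess n μ NS)
include h

theorem measurable (t : ℕ) : Measurable (NS t) := h.2.1 t

theorem measure_preimage_succ (ht : t < 3 * n) (q : (Fin 3 → ℕ) × ℤ) :
    μ (NS (t + 1) ⁻¹' {q}) = ∫⁻ ω, stepProb n (NS t ω) q ∂μ :=
  measure_preimage_succ_singleton h.measurable (h.2.2.2 t ht) q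

theorem ae_start : ∀ᵐ ω ∂μ, NS 0 ω = 0 := by
  have := h.1
  exact (mem_ae_iff_prob_eq_one (h.measurable 0 (measurableSet_singleton _))).2 h.2.2.1

theorem ae_mem_reachableStates (ht : t ≤ 3 * n) : ∀ᵐ ω ∂μ, NS t ω ∈ reachableStates n t := by
  induction t with
  | zero => exact h.ae_start.mono fun ω hω => by simp [hω, reachableStates]
  | succ t ih =>
    exact ae_of_measure_preimage_eq_lintegral (h.measure_preimage_succ ht) (ih (by lia))
      fun _ _ => mem_reachableStates_succ

theorem integral_score_add_expectedGain {m : ℕ} (htm : t + m = 3 * n) :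
    ∫ ω, ((NS t ω).2 + expectedGain n m (NS t ω).1) ∂μ = expectedGain n (3 * n) 0 := by
  have := h.1
  induction t generalizing m with
  | zero =>
    rw [← htm, integral_congr_ae (h.ae_start.mono fun ω hω => by rw [hω])]
    simp
  | succ t ih =>
    have ht : t < 3 * n := by lia
    rw [← ih (m := m + 1) (by lia),
      integral_comp_eq_integral_tsum (h.measurable t) (h.measurable (t + 1))
        (h.measure_preimage_succ ht) (finite_reachableStates n (t + 1))
        (h.ae_mem_reachableStates ht) fun q => q.2 + expectedGain n m q.1]
    refine integral_congr_ae ((h.ae_mem_reachableStates ht.le).mono fun ω hω => ?_)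
    refine stepMean_add_expectedGain hω.1 ?_ m
    by_contra! hfull
    have hsum := hω.2.1
    rw [Fin.sum_univ_three] at hsum
    linarith [hfull 0, hfull 1, hfull 2]

theorem integral_final_score :
    ∫ ω, ((NS (3 * n) ω).2 : ℝ) ∂μ = expectedGain n (3 * n) 0 := by
  simpa [expectedGain] using h.integral_score_add_expectedGain (add_zero _)

end IsGreedyProcess

end GreedyProcess

/-- Theorem 1 via greedy play:
`E[S_n^gr] / sqrt n → 3√3 / (2√π)` as `n → ∞`. -/
theorem expected_greedy_score_asymptotics
    (Ω : ℕ → Type*) [∀ n, MeasurableSpace (Ω n)] (μ : ∀ n, Measure (Ω n))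
    (NS : ∀ n, ℕ → Ω n → (Fin 3 → ℕ) × ℤ)
    (hproc : ∀ n, 1 ≤ n → IsGreedyProcess n (μ n) (NS n)) :
    Tendsto (fun n : ℕ =>
        (∫ ω, (((NS n (3 * n) ω).2 : ℝ)) ∂(μ n)) / Real.sqrt n)
      atTop (𝓝 (3 * Real.sqrt 3 / (2 * Real.sqrt π))) := by
  refine tendsto_expectedGain_zero_div_sqrt.congr' ?_
  filter_upwards [eventually_ge_atTop 1] with n hn
  rw [(hproc n hn).integral_final_score]

end RPSGreedy
end

section
/- (Theorem T2(iv).) Let R be a random variable with probability density (1/2)·r·e^{−r²/4} on (0,∞) (a Rayleigh distribution), let Θ be uniformly distributed on (0, π/3), and let R and Θ be independent. Then R·cos Θ has the same distribution as max(Z_1, Z_2, Z_3). -/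
open MeasureTheory ProbabilityTheory Real Filter
open scoped ENNReal Topology

/-!
The vector `(Z₁, Z₂, Z₃)` has the covariances `2 cos (αᵢ - αⱼ)` for the three angles
`0, 2π/3, -2π/3`, so it is the projection of a planar Gaussian vector with independent `N(0, 2)`
coordinates onto three directions at equal angles. In polar coordinates `Zᵢ = R cos (Φ - αᵢ)` with
`R` Rayleigh and `Φ` uniform on `(-π, π)`, independent, so the maximum is
`R · max (cos Φ, cos (Φ - 2π/3), cos (Φ + 2π/3))`. The second factor is `2π/3`-periodic in `Φ` and
equals the even function `cos Φ` on `[-π/3, π/3]`, hence it has the law of `cos Θ` for `Θ` uniform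
on `(0, π/3)`.
-/

open Set
open scoped NNReal Matrix

section LinearForms

variable {ι : Type*} [Fintype ι]

lemma measure_ext_of_map_dotProduct {μ ν : Measure (ι → ℝ)} [IsFiniteMeasure μ] [IsFiniteMeasure ν]
    (h : ∀ c : ι → ℝ, μ.map (fun x => c ⬝ᵥ x) = ν.map (fun x => c ⬝ᵥ x)) : μ = ν := by
  classical
  refine Measure.ext_of_charFunDual (funext fun L => ?_)
  have hL : (L : (ι → ℝ) → ℝ) = fun x => (fun i => L (Pi.single i 1)) ⬝ᵥ x := by
    ext x
    conv_lhs => rw [pi_eq_sum_univ' x, map_sum]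
    simp only [map_smul, smul_eq_mul, dotProduct, mul_comm]
  rw [charFunDual_eq_charFun_map_one, charFunDual_eq_charFun_map_one, hL, h]

lemma gaussianReal_prod_map_linear_combination (m₁ m₂ : ℝ) (v₁ v₂ : ℝ≥0) (a b : ℝ) :
    ((gaussianReal m₁ v₁).prod (gaussianReal m₂ v₂)).map (fun p => a * p.1 + b * p.2) =
      gaussianReal (a * m₁ + b * m₂) (Real.toNNReal (a ^ 2 * v₁ + b ^ 2 * v₂)) := by
  calc
    _ = ((gaussianReal m₁ v₁).map (a * ·)).conv ((gaussianReal m₂ v₂).map (b * ·)) := by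
      rw [Measure.conv, Measure.map_prod_map _ _ (by fun_prop) (by fun_prop),
        Measure.map_map (by fun_prop) (by fun_prop)]
      rfl
    _ = _ := by
      rw [gaussianReal_map_const_mul, gaussianReal_map_const_mul, gaussianReal_conv_gaussianReal]
      congr 1
      ext
      rw [Real.coe_toNNReal _ (by positivity)]
      simp

lemma eq_gaussianReal_prod_map_of_map_dotProduct {μ : Measure (ι → ℝ)} [IsFiniteMeasure μ]
    (v : ℝ≥0) (a b : ι → ℝ)
    (h : ∀ c : ι → ℝ, μ.map (fun x => c ⬝ᵥ x) =
      gaussianReal 0 (Real.toNNReal (v * ((c ⬝ᵥ a) ^ 2 + (c ⬝ᵥ b) ^ 2)))) :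
    μ = ((gaussianReal 0 v).prod (gaussianReal 0 v)).map (fun p i => a i * p.1 + b i * p.2) := by
  refine measure_ext_of_map_dotProduct fun c => ?_
  have hc : ((fun x => c ⬝ᵥ x) ∘ fun (p : ℝ × ℝ) i => a i * p.1 + b i * p.2) =
      fun p => (c ⬝ᵥ a) * p.1 + (c ⬝ᵥ b) * p.2 := by
    ext p
    simp only [Function.comp_apply, dotProduct, Finset.sum_mul, ← Finset.sum_add_distrib]
    exact Finset.sum_congr rfl fun i _ => by ring
  rw [h, Measure.map_map (by unfold dotProduct; fun_prop) (by fun_prop), hc,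
    gaussianReal_prod_map_linear_combination]
  congr 2 <;> ring

end LinearForms

lemma volume_cond_Ioo {a b : ℝ} (hab : a < b) :
    volume[|Ioo a b] = ENNReal.ofReal (b - a)⁻¹ • volume.restrict (Ioo a b) := by
  rw [ProbabilityTheory.cond, volume_Ioo, ← ENNReal.ofReal_inv_of_pos (sub_pos.2 hab)]

section Polar

/-- The Rayleigh law with squared scale `v`: the law of the radius of a planar vector whose
coordinates are independent centered Gaussians of variance `v`. For `v = 0` division by zero makes
this the zero measure, not the Dirac mass at `0`. -/
noncomputable def rayleighReal (v : ℝ≥0) : Measure ℝ :=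
  (volume.restrict (Ioi 0)).withDensity fun r => ENNReal.ofReal (r / v * exp (-r ^ 2 / (2 * v)))

instance rayleighReal.instSFinite (v : ℝ≥0) : SFinite (rayleighReal v) := by
  unfold rayleighReal
  infer_instance

lemma rayleighReal_ae_pos (v : ℝ≥0) : ∀ᵐ r ∂rayleighReal v, 0 < r :=
  (withDensity_absolutelyContinuous _ _).ae_le (ae_restrict_mem measurableSet_Ioi)

lemma gaussianPDF_mul_gaussianPDF_polar (v : ℝ≥0) (r θ : ℝ) :
    gaussianPDF 0 v (r * cos θ) * gaussianPDF 0 v (r * sin θ) =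
      ENNReal.ofReal ((2 * π * v)⁻¹ * exp (-r ^ 2 / (2 * v))) := by
  have hexp : exp (-(r * cos θ - 0) ^ 2 / (2 * v)) * exp (-(r * sin θ - 0) ^ 2 / (2 * v)) =
      exp (-r ^ 2 / (2 * v)) := by
    rw [← exp_add]
    congr 1
    linear_combination (-r ^ 2 / (2 * v)) * sin_sq_add_cos_sq θ
  rw [gaussianPDF, gaussianPDF, ← ENNReal.ofReal_mul (gaussianPDFReal_nonneg _ _ _),
    gaussianPDFReal, gaussianPDFReal, mul_mul_mul_comm, hexp, ← mul_inv,
    mul_self_sqrt (by positivity)]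

lemma rayleighReal_prod_uniform (v : ℝ≥0) :
    (rayleighReal v).prod volume[|Ioo (-π) π] =
      (volume.restrict polarCoord.target).withDensity fun p =>
        ENNReal.ofReal p.1 * ENNReal.ofReal ((2 * π * v)⁻¹ * exp (-p.1 ^ 2 / (2 * v))) := by
  rw [rayleighReal, volume_cond_Ioo (by linarith [pi_pos]), Measure.prod_smul_right,
    prod_withDensity_left (by fun_prop), Measure.prod_restrict, ← Measure.volume_eq_prod,
    ← polarCoord_target, ← withDensity_smul _ (by fun_prop)]
  refine withDensity_congr_ae ?_
  filter_upwards [ae_restrict_mem polarCoord.open_target.measurableSet] with p hp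
  have hr : 0 < p.1 := hp.1
  rw [Pi.smul_apply, smul_eq_mul, sub_neg_eq_add, ← two_mul, ← ENNReal.ofReal_mul (by positivity),
    ← ENNReal.ofReal_mul hr.le, mul_inv _ (v : ℝ)]
  ring_nf

theorem gaussianReal_prod_eq_map_polarCoord_symm {v : ℝ≥0} (hv : v ≠ 0) :
    (gaussianReal 0 v).prod (gaussianReal 0 v) =
      ((rayleighReal v).prod volume[|Ioo (-π) π]).map polarCoord.symm := by
  refine Measure.ext_of_lintegral _ fun f hf => ?_
  have hpolar : Measurable polarCoord.symm := continuous_polarCoord_symm.measurable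
  rw [lintegral_map hf hpolar, rayleighReal_prod_uniform,
    lintegral_withDensity_eq_lintegral_mul _ (by fun_prop) (by fun_prop),
    gaussianReal_of_var_ne_zero _ hv, prod_withDensity (by fun_prop) (by fun_prop),
    lintegral_withDensity_eq_lintegral_mul _ (by fun_prop) hf, ← Measure.volume_eq_prod,
    ← lintegral_comp_polarCoord_symm]
  refine lintegral_congr fun p => ?_
  simp only [Pi.mul_apply, polarCoord_symm_apply, smul_eq_mul,
    gaussianPDF_mul_gaussianPDF_polar, mul_assoc]

theorem eq_map_rayleighReal_prod_uniform_of_map_dotProduct {ι : Type*} [Fintype ι]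
    {μ : Measure (ι → ℝ)} [IsFiniteMeasure μ] {v : ℝ≥0} (hv : v ≠ 0) (α : ι → ℝ)
    (h : ∀ c : ι → ℝ, μ.map (fun x => c ⬝ᵥ x) = gaussianReal 0 (Real.toNNReal
      (v * ((c ⬝ᵥ fun i => cos (α i)) ^ 2 + (c ⬝ᵥ fun i => sin (α i)) ^ 2)))) :
    μ = ((rayleighReal v).prod volume[|Ioo (-π) π]).map (fun p i => p.1 * cos (p.2 - α i)) := by
  rw [eq_gaussianReal_prod_map_of_map_dotProduct v _ _ h,
    gaussianReal_prod_eq_map_polarCoord_symm hv,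
    Measure.map_map (by fun_prop) continuous_polarCoord_symm.measurable]
  congr 1
  ext p i
  simp only [Function.comp_apply, polarCoord_symm_apply, cos_sub]
  ring

end Polar

section Uniform

variable {E : Type*} [MeasurableSpace E]

lemma map_cond_eq_of_map_restrict_eq_smul {α β : Type*} [MeasurableSpace α] [MeasurableSpace β]
    {μ : Measure α} {ν : Measure β} {s : Set α} {t : Set β} {f : α → E} {g : β → E}
    (hf : Measurable f) (hg : Measurable g) {c : ℝ≥0∞} (hc₀ : c ≠ 0) (hc : c ≠ ∞)
    (h : (μ.restrict s).map f = c • (ν.restrict t).map g) :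
    μ[|s].map f = ν[|t].map g := by
  have hmass : μ s = c * ν t := by
    simpa [Measure.map_apply hf, Measure.map_apply hg] using congrArg (· univ) h
  rw [ProbabilityTheory.cond, ProbabilityTheory.cond, Measure.map_smul, Measure.map_smul, h,
    smul_smul, hmass, ENNReal.mul_inv (.inl hc₀) (.inl hc), mul_right_comm,
    ENNReal.inv_mul_cancel hc₀ hc, one_mul]

lemma map_restrict_Ioc_eq_of_periodic {f : ℝ → E} (hf : Measurable f) {T : ℝ}
    (hper : Function.Periodic f T) (hT : 0 < T) (a b : ℝ) :
    (volume.restrict (Ioc a (a + T))).map f = (volume.restrict (Ioc b (b + T))).map f := by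
  ext s hs
  rw [Measure.map_apply hf hs, Measure.map_apply hf hs, Measure.restrict_apply (hf hs),
    Measure.restrict_apply (hf hs)]
  refine (isAddFundamentalDomain_Ioc hT a).measure_set_eq (isAddFundamentalDomain_Ioc hT b)
    (hf hs) fun g => ?_
  ext x
  simp only [mem_preimage, hper.map_vadd_zmultiples]

lemma map_restrict_Ioc_add_nat_mul_of_periodic {f : ℝ → E} (hf : Measurable f) {T : ℝ}
    (hper : Function.Periodic f T) (hT : 0 < T) (a b : ℝ) (n : ℕ) :
    (volume.restrict (Ioc a (a + n * T))).map f =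
      (n : ℝ≥0∞) • (volume.restrict (Ioc b (b + T))).map f := by
  induction n with
  | zero => simp
  | succ n ih =>
    have hsplit : Ioc a (a + (n + 1 : ℕ) * T) =
        Ioc a (a + n * T) ∪ Ioc (a + n * T) (a + n * T + T) := by
      rw [Ioc_union_Ioc_eq_Ioc (le_add_of_nonneg_right (by positivity)) (by linarith)]
      push_cast
      ring_nf
    rw [hsplit, Measure.restrict_union (Ioc_disjoint_Ioc_of_le le_rfl) measurableSet_Ioc,
      Measure.map_add _ _ hf, ih, map_restrict_Ioc_eq_of_periodic hf hper hT (a + n * T) b]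
    push_cast
    rw [add_smul, one_smul]

theorem map_uniform_Ioo_of_periodic {f : ℝ → E} (hf : Measurable f) {T : ℝ}
    (hper : Function.Periodic f T) (hT : 0 < T) (a b : ℝ) {n : ℕ} (hn : n ≠ 0) :
    volume[|Ioo a (a + n * T)].map f = volume[|Ioo b (b + T)].map f := by
  refine map_cond_eq_of_map_restrict_eq_smul hf hf (Nat.cast_ne_zero.2 hn)
    (ENNReal.natCast_ne_top n) ?_
  simpa only [Measure.restrict_congr_set Ioo_ae_eq_Ioc] using
    map_restrict_Ioc_add_nat_mul_of_periodic hf hper hT a b n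

theorem map_uniform_Ioo_of_even {f : ℝ → E} (hf : Measurable f) (heven : Function.Even f)
    {a : ℝ} (ha : 0 < a) :
    volume[|Ioo (-a) a].map f = volume[|Ioo 0 a].map f := by
  have hneg : (volume.restrict (Ioc (-a) 0)).map f = (volume.restrict (Ioo 0 a)).map f := by
    have hreflect := ((Measure.measurePreserving_neg (volume : Measure ℝ)).restrict_preimage
      (measurableSet_Ioo (a := 0) (b := a))).map_eq
    rw [← hreflect, Measure.map_map hf measurable_neg,
      Measure.restrict_congr_set Ioo_ae_eq_Ioc.symm]
    simp [Function.comp_def, heven _]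
  refine map_cond_eq_of_map_restrict_eq_smul hf hf two_ne_zero ENNReal.ofNat_ne_top ?_
  rw [← Ioc_union_Ioo_eq_Ioo (neg_nonpos.2 ha.le) ha, Measure.restrict_union _ measurableSet_Ioo,
    Measure.map_add _ _ hf, hneg, two_smul]
  exact disjoint_left.2 fun x hx hx' => hx'.1.not_ge hx.2

end Uniform

section MaxCos

/-- The largest of the first coordinates of the three vertices of the equilateral triangle
inscribed in the unit circle with one vertex at angle `θ`. -/
noncomputable def maxCos (θ : ℝ) : ℝ :=
  max (cos θ) (max (cos (θ - 2 * π / 3)) (cos (θ + 2 * π / 3)))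

@[fun_prop]
lemma measurable_maxCos : Measurable maxCos := by
  unfold maxCos
  fun_prop

lemma maxCos_periodic : Function.Periodic maxCos (2 * π / 3) := by
  intro θ
  have hwrap : cos (θ + 2 * π / 3 + 2 * π / 3) = cos (θ - 2 * π / 3) := by
    rw [← cos_add_two_pi (θ - 2 * π / 3)]
    ring_nf
  rw [maxCos, maxCos, hwrap, add_sub_cancel_right, max_left_comm, max_comm (cos (θ + _))]

lemma maxCos_of_abs_le {θ : ℝ} (hθ : |θ| ≤ π / 3) : maxCos θ = cos θ := by
  obtain ⟨hlo, hhi⟩ := abs_le.1 hθ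
  refine max_eq_left (max_le ?_ ?_)
  · rw [← cos_abs θ, ← cos_neg (θ - _)]
    exact cos_le_cos_of_nonneg_of_le_pi (abs_nonneg θ) (by linarith [pi_pos]) (by linarith)
  · rw [← cos_abs θ]
    exact cos_le_cos_of_nonneg_of_le_pi (abs_nonneg θ) (by linarith [pi_pos]) (by linarith)

theorem map_maxCos_uniform :
    volume[|Ioo (-π) π].map maxCos = volume[|Ioo 0 (π / 3)].map cos := by
  calc
    volume[|Ioo (-π) π].map maxCos = volume[|Ioo (-(π / 3)) (π / 3)].map maxCos := by
      convert map_uniform_Ioo_of_periodic measurable_maxCos maxCos_periodic (by positivity)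
        (-π) (-(π / 3)) three_ne_zero using 4 <;> push_cast <;> ring
    _ = volume[|Ioo (-(π / 3)) (π / 3)].map cos :=
      Measure.map_congr <| ae_cond_of_forall_mem measurableSet_Ioo fun θ hθ =>
        maxCos_of_abs_le (abs_le.2 ⟨hθ.1.le, hθ.2.le⟩)
    _ = volume[|Ioo 0 (π / 3)].map cos :=
      map_uniform_Ioo_of_even measurable_cos cos_neg (by positivity)

end MaxCos

lemma map_mul_prod_map {M E : Type*} [Mul M] [MeasurableSpace M] [MeasurableMul₂ M]
    [MeasurableSpace E] (ρ : Measure M) (ν : Measure E) [SFinite ρ] [SFinite ν] {g : E → M}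
    (hg : Measurable g) :
    (ρ.prod (ν.map g)).map (fun p => p.1 * p.2) = (ρ.prod ν).map (fun p => p.1 * g p.2) := by
  conv_lhs => rw [← Measure.map_id (μ := ρ), Measure.map_prod_map _ _ measurable_id hg,
    Measure.map_map measurable_mul (measurable_id.prodMap hg)]
  rfl

section EquiangularGaussian

variable {Ω : Type*} [MeasurableSpace Ω] {P : Measure Ω} [IsFiniteMeasure P] {v : ℝ≥0}
  {Z₁ Z₂ Z₃ : Ω → ℝ}

lemma map_vec3_eq_map_rayleighReal_prod_uniform
    (hv : v ≠ 0) (hZ₁ : Measurable Z₁) (hZ₂ : Measurable Z₂) (hZ₃ : Measurable Z₃)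
    (hZ : ∀ a b c : ℝ, P.map (fun ω => a * Z₁ ω + b * Z₂ ω + c * Z₃ ω) =
      gaussianReal 0 (Real.toNNReal
        (v * (a ^ 2 + b ^ 2 + c ^ 2 - (a * b + a * c + b * c))))) :
    P.map (fun ω => ![Z₁ ω, Z₂ ω, Z₃ ω]) =
      ((rayleighReal v).prod volume[|Ioo (-π) π]).map
        (fun p i => p.1 * cos (p.2 - ![0, 2 * π / 3, -(2 * π / 3)] i)) := by
  have hcos : cos (2 * π / 3) = -1 / 2 := by
    rw [show 2 * π / 3 = π - π / 3 by ring, cos_pi_sub, cos_pi_div_three]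
    norm_num
  have hsin : sin (2 * π / 3) = √3 / 2 := by
    rw [show 2 * π / 3 = π - π / 3 by ring, sin_pi_sub, sin_pi_div_three]
  have hsqrt : √3 ^ 2 = 3 := sq_sqrt (by norm_num)
  refine eq_map_rayleighReal_prod_uniform_of_map_dotProduct hv _ fun c => ?_
  rw [Measure.map_map (by unfold dotProduct; fun_prop) (by fun_prop)]
  simp only [Function.comp_def, Matrix.vec3_dotProduct, Matrix.cons_val]
  rw [hZ, cos_zero, sin_zero, cos_neg, sin_neg, hcos, hsin]
  congr 2
  linear_combination (-v / 4) * (c 1 - c 2) ^ 2 * hsqrt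

theorem map_max_eq_map_mul_maxCos
    (hv : v ≠ 0) (hZ₁ : Measurable Z₁) (hZ₂ : Measurable Z₂) (hZ₃ : Measurable Z₃)
    (hZ : ∀ a b c : ℝ, P.map (fun ω => a * Z₁ ω + b * Z₂ ω + c * Z₃ ω) =
      gaussianReal 0 (Real.toNNReal
        (v * (a ^ 2 + b ^ 2 + c ^ 2 - (a * b + a * c + b * c))))) :
    P.map (fun ω => max (Z₁ ω) (max (Z₂ ω) (Z₃ ω))) =
      ((rayleighReal v).prod volume[|Ioo (-π) π]).map (fun p => p.1 * maxCos p.2) := by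
  calc
    _ = (P.map fun ω => ![Z₁ ω, Z₂ ω, Z₃ ω]).map (fun x => max (x 0) (max (x 1) (x 2))) := by
      rw [Measure.map_map (by fun_prop) (by fun_prop)]
      rfl
    _ = ((rayleighReal v).prod volume[|Ioo (-π) π]).map (fun p => max (p.1 * cos p.2)
          (max (p.1 * cos (p.2 - 2 * π / 3)) (p.1 * cos (p.2 + 2 * π / 3)))) := by
      rw [map_vec3_eq_map_rayleighReal_prod_uniform hv hZ₁ hZ₂ hZ₃ hZ,
        Measure.map_map (by fun_prop) (by fun_prop)]
      simp only [Function.comp_def, Matrix.cons_val, sub_zero, sub_neg_eq_add]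
    _ = _ := by
      refine Measure.map_congr ?_
      filter_upwards [Measure.quasiMeasurePreserving_fst.ae (rayleighReal_ae_pos v)] with p hp
      rw [maxCos, mul_max_of_nonneg _ _ hp.le, mul_max_of_nonneg _ _ hp.le]

end EquiangularGaussian

/-- Theorem T2(iv): if `R` has density `(1/2)·r·exp(−r²/4)` on `(0,∞)` and
`Θ` is uniform on `(0, π/3)`, independent of `R`, then `R·cos Θ` has the same distribution as
`max(Z₁,Z₂,Z₃)`, where `(Z₁,Z₂,Z₃)` is a centered Gaussian vector with covariance matrix
`[[2,−1,−1],[−1,2,−1],[−1,−1,2]]`. -/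
theorem max_gaussian_repr_polar
    {Ω₁ : Type*} [MeasurableSpace Ω₁] (P₁ : Measure Ω₁) [IsProbabilityMeasure P₁]
    (R Θ : Ω₁ → ℝ) (hRm : Measurable R) (hΘm : Measurable Θ)
    (hR : P₁.map R = volume.withDensity
        (fun r => if 0 < r then ENNReal.ofReal (1 / 2 * r * Real.exp (-r ^ 2 / 4)) else 0))
    (hΘ : P₁.map Θ = (ENNReal.ofReal (3 / π)) • volume.restrict (Set.Ioo 0 (π / 3)))
    (hindep : IndepFun R Θ P₁)
    {Ω₂ : Type*} [MeasurableSpace Ω₂] (P₂ : Measure Ω₂) [IsProbabilityMeasure P₂]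
    (Z1 Z2 Z3 : Ω₂ → ℝ)
    (hZ1 : Measurable Z1) (hZ2 : Measurable Z2) (hZ3 : Measurable Z3)
    (hZ : ∀ a b c : ℝ, P₂.map (fun ω => a * Z1 ω + b * Z2 ω + c * Z3 ω)
        = gaussianReal 0 (Real.toNNReal
            (2 * (a ^ 2 + b ^ 2 + c ^ 2) - 2 * (a * b + a * c + b * c)))) :
    P₁.map (fun ω => R ω * Real.cos (Θ ω))
      = P₂.map (fun ω => max (Z1 ω) (max (Z2 ω) (Z3 ω))) := by
  have hRayleigh : P₁.map R = rayleighReal 2 := by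
    rw [hR, rayleighReal, ← withDensity_indicator measurableSet_Ioi]
    congr 1
    ext r
    simp only [indicator, mem_Ioi, NNReal.coe_ofNat]
    ring_nf
  have hUniform : P₁.map Θ = volume[|Ioo 0 (π / 3)] := by
    rw [hΘ, volume_cond_Ioo (by positivity), sub_zero, inv_div]
  calc
    _ = ((P₁.map R).prod (P₁.map Θ)).map (fun p => p.1 * cos p.2) := by
      rw [← (indepFun_iff_map_prod_eq_prod_map_map hRm.aemeasurable hΘm.aemeasurable).1 hindep,
        Measure.map_map (by fun_prop) (by fun_prop)]
      rfl
    _ = ((rayleighReal 2).prod volume[|Ioo (-π) π]).map (fun p => p.1 * maxCos p.2) := by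
      rw [hRayleigh, hUniform, ← map_mul_prod_map _ _ measurable_cos, ← map_maxCos_uniform,
        map_mul_prod_map _ _ measurable_maxCos]
    _ = _ := (map_max_eq_map_mul_maxCos two_ne_zero hZ1 hZ2 hZ3 fun a b c => by
      rw [hZ, NNReal.coe_ofNat, mul_sub]).symm
end

section
/- (Equations (ymer1)–(ymer2).) E[(W + max(Z_1, Z_2, Z_3))²] = 4 + 3√3/(2π), and consequently Var(W + max(Z_1, Z_2, Z_3)) = 4 − (27 − 6√3)/(4π). -/
open MeasureTheory ProbabilityTheory Real Filter
open scoped ENNReal Topology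

/-!
The covariance matrix is twice the Gram matrix of the vertices `u₀, u₁, u₂` of an equilateral
triangle inscribed in the unit circle, so by the Cramér–Wold theorem `(Z₁, Z₂, Z₃)` has the law of
`(⟨u₀, G⟩, ⟨u₁, G⟩, ⟨u₂, G⟩)` for a planar Gaussian vector `G` with covariance `2 I`. The maximum
of the coordinates is the support function of the triangle at `G`. Being positively homogeneous,
it has moments that factor in polar coordinates into a radial Gamma integral and an angular
integral, and by the threefold symmetry of the triangle the latter is
`3 ∫ t in -π/3..π/3, cos t ^ k`.
-/

theorem measure_ext_of_forall_map_strongDual {E : Type*} [NormedAddCommGroup E] [NormedSpace ℝ E]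
    [CompleteSpace E] [SecondCountableTopology E] [MeasurableSpace E] [BorelSpace E]
    {μ ν : Measure E} [IsFiniteMeasure μ] [IsFiniteMeasure ν]
    (h : ∀ L : StrongDual ℝ E, μ.map L = ν.map L) : μ = ν := by
  refine Measure.ext_of_charFunDual (funext fun L => ?_)
  rw [charFunDual_eq_charFun_map_one, h, ← charFunDual_eq_charFun_map_one]

theorem measure_ext_of_forall_map_linearCombination {μ ν : Measure (ℝ × ℝ × ℝ)}
    [IsFiniteMeasure μ] [IsFiniteMeasure ν]
    (h : ∀ a b c : ℝ, μ.map (fun q => a * q.1 + b * q.2.1 + c * q.2.2) =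
      ν.map (fun q => a * q.1 + b * q.2.1 + c * q.2.2)) : μ = ν := by
  refine measure_ext_of_forall_map_strongDual fun L => ?_
  have hL (q : ℝ × ℝ × ℝ) :
      L q = L (1, 0, 0) * q.1 + L (0, 1, 0) * q.2.1 + L (0, 0, 1) * q.2.2 := by
    have hq : q = q.1 • (1, 0, 0) + q.2.1 • (0, 1, 0) + q.2.2 • (0, 0, 1) := by simp
    calc L q = L (q.1 • (1, 0, 0) + q.2.1 • (0, 1, 0) + q.2.2 • (0, 0, 1)) := by rw [← hq]
      _ = _ := by
        rw [map_add, map_add, map_smul, map_smul, map_smul]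
        simp only [smul_eq_mul, mul_comm]
  rw [funext hL]
  exact h _ _ _

theorem integral_add_sq_of_indepFun {Ω : Type*} [MeasurableSpace Ω] {P : Measure Ω} {X Y : Ω → ℝ}
    (hX : MemLp X 2 P) (hY : MemLp Y 2 P) (hXY : IndepFun X Y P) (hX₀ : ∫ ω, X ω ∂P = 0) :
    ∫ ω, (X ω + Y ω) ^ 2 ∂P = ∫ ω, X ω ^ 2 ∂P + ∫ ω, Y ω ^ 2 ∂P := by
  have hcross : ∫ ω, 2 * (X ω * Y ω) ∂P = 0 := by
    rw [integral_const_mul, hXY.integral_fun_mul_eq_mul_integral hX.1 hY.1, hX₀, zero_mul, mul_zero]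
  have hXYint : Integrable (fun ω => 2 * (X ω * Y ω)) P := (hX.integrable_mul hY).const_mul 2
  calc ∫ ω, (X ω + Y ω) ^ 2 ∂P = ∫ ω, X ω ^ 2 + Y ω ^ 2 + 2 * (X ω * Y ω) ∂P := by
        congr with ω
        ring
    _ = ∫ ω, X ω ^ 2 ∂P + ∫ ω, Y ω ^ 2 ∂P := by
        rw [integral_add (by exact hX.integrable_sq.add hY.integrable_sq) hXYint,
          integral_add hX.integrable_sq hY.integrable_sq, hcross, add_zero]

section PlanarGaussian

open scoped NNReal

theorem map_linearCombination_prod_gaussianReal (m₁ m₂ : ℝ) (v₁ v₂ : ℝ≥0) (a b : ℝ) :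
    ((gaussianReal m₁ v₁).prod (gaussianReal m₂ v₂)).map (fun p => a * p.1 + b * p.2) =
      gaussianReal (a * m₁ + b * m₂) (.mk (a ^ 2) (sq_nonneg a) * v₁ +
        .mk (b ^ 2) (sq_nonneg b) * v₂) := by
  rw [← gaussianReal_conv_gaussianReal, ← gaussianReal_map_const_mul, ← gaussianReal_map_const_mul,
    Measure.conv, Measure.map_prod_map _ _ (by fun_prop) (by fun_prop),
    Measure.map_map (by fun_prop) (by fun_prop)]
  rfl

theorem gaussianPDFReal_mul_gaussianPDFReal (v : ℝ≥0) (x y : ℝ) :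
    gaussianPDFReal 0 v x * gaussianPDFReal 0 v y =
      (2 * π * v)⁻¹ * exp (-(x ^ 2 + y ^ 2) / (2 * v)) := by
  have hsqrt : √(2 * π * v) * √(2 * π * v) = 2 * π * v := mul_self_sqrt (by positivity)
  simp only [gaussianPDFReal, sub_zero]
  rw [mul_mul_mul_comm, ← mul_inv, hsqrt, ← exp_add, neg_add, add_div]

theorem integral_rpow_mul_exp_neg_sq_div {s v : ℝ} (hs : -2 < s) (hv : 0 < v) :
    ∫ r in Set.Ioi (0 : ℝ), r ^ (s + 1) * exp (-r ^ 2 / (2 * v)) =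
      v * (2 * v) ^ (s / 2) * Gamma (s / 2 + 1) := by
  have h := integral_rpow_mul_exp_neg_mul_rpow (p := 2) (q := s + 1) (b := (2 * v)⁻¹)
    two_pos (by linarith) (by positivity)
  have hpow : ((2 * v)⁻¹) ^ (-(s + 1 + 1) / 2) = (2 * v) ^ (s / 2) * (2 * v) := by
    rw [inv_rpow (by positivity), ← rpow_neg (by positivity), ← rpow_add_one (by positivity)]
    congr 1
    ring
  rw [hpow, show (s + 1 + 1) / 2 = s / 2 + 1 by ring] at h
  calc _ = ∫ r in Set.Ioi (0 : ℝ), r ^ (s + 1) * exp (-(2 * v)⁻¹ * r ^ (2 : ℝ)) := by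
        congr with r
        rw [rpow_two]
        congr 2
        ring
    _ = _ := by
        rw [h]
        ring

variable {E : Type*} [NormedAddCommGroup E] [NormedSpace ℝ E]

theorem integral_prod_gaussianReal_eq_integral_smul {m₁ m₂ : ℝ} {v₁ v₂ : ℝ≥0} (hv₁ : v₁ ≠ 0)
    (hv₂ : v₂ ≠ 0) (f : ℝ × ℝ → E) :
    ∫ p, f p ∂((gaussianReal m₁ v₁).prod (gaussianReal m₂ v₂)) =
      ∫ p : ℝ × ℝ, (gaussianPDFReal m₁ v₁ p.1 * gaussianPDFReal m₂ v₂ p.2) • f p := by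
  have hfinite : ∀ᵐ p : ℝ × ℝ, gaussianPDF m₁ v₁ p.1 * gaussianPDF m₂ v₂ p.2 < ∞ :=
    .of_forall fun _ => ENNReal.mul_lt_top gaussianPDF_lt_top gaussianPDF_lt_top
  rw [gaussianReal_of_var_ne_zero _ hv₁, gaussianReal_of_var_ne_zero _ hv₂,
    prod_withDensity (measurable_gaussianPDF _ _) (measurable_gaussianPDF _ _),
    ← Measure.volume_eq_prod, integral_withDensity_eq_integral_toReal_smul (by fun_prop) hfinite]
  simp only [ENNReal.toReal_mul, toReal_gaussianPDF]

theorem integral_prod_gaussianReal_of_homogeneous {v : ℝ≥0} (hv : v ≠ 0) {s : ℝ} (hs : -2 < s)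
    {f : ℝ × ℝ → E} (hf : ∀ r : ℝ, 0 < r → ∀ p, f (r • p) = r ^ s • f p) :
    ∫ p, f p ∂((gaussianReal 0 v).prod (gaussianReal 0 v)) =
      ((2 * v) ^ (s / 2) * Gamma (s / 2 + 1) / (2 * π)) • ∫ t in -π..π, f (cos t, sin t) := by
  have hv' : (0 : ℝ) < v := by positivity
  let radial : ℝ → ℝ := fun r => (2 * π * v)⁻¹ * (r ^ (s + 1) * exp (-r ^ 2 / (2 * v)))
  have hpolar : ∀ p ∈ polarCoord.target,
      p.1 • (gaussianPDFReal 0 v (polarCoord.symm p).1 *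
        gaussianPDFReal 0 v (polarCoord.symm p).2) • f (polarCoord.symm p) =
      radial p.1 • f (cos p.2, sin p.2) := by
    rintro ⟨r, t⟩ ⟨hr : 0 < r, -⟩
    have hsq : (r * cos t) ^ 2 + (r * sin t) ^ 2 = r ^ 2 := by
      linear_combination r ^ 2 * sin_sq_add_cos_sq t
    have hft : f (r * cos t, r * sin t) = r ^ s • f (cos t, sin t) := hf r hr (cos t, sin t)
    simp only [polarCoord_symm_apply, gaussianPDFReal_mul_gaussianPDFReal, hsq, hft, smul_smul,
      radial, rpow_add_one hr.ne']
    congr 1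
    ring
  rw [integral_prod_gaussianReal_eq_integral_smul hv hv, ← integral_comp_polarCoord_symm,
    setIntegral_congr_fun polarCoord.open_target.measurableSet hpolar, polarCoord_target,
    Measure.volume_eq_prod, ← Measure.prod_restrict,
    integral_prod_smul radial fun t => f (cos t, sin t),
    intervalIntegral.integral_of_le (by linarith [pi_pos]), integral_Ioc_eq_integral_Ioo,
    integral_const_mul, integral_rpow_mul_exp_neg_sq_div hs hv']
  congr 1
  field_simp

end PlanarGaussian

section Triangle

open scoped NNReal

/-- The scalar products of `p` with the unit vectors at angles `0`, `2π/3` and `-2π/3`, the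
vertices of an equilateral triangle. -/
noncomputable def triangleCoords (p : ℝ × ℝ) : ℝ × ℝ × ℝ :=
  (p.1, -p.1 / 2 + √3 / 2 * p.2, -p.1 / 2 - √3 / 2 * p.2)

/-- The support function of the equilateral triangle inscribed in the unit circle with a vertex
at `(1, 0)`. -/
noncomputable def triangleSupport (p : ℝ × ℝ) : ℝ :=
  max (triangleCoords p).1 (max (triangleCoords p).2.1 (triangleCoords p).2.2)

theorem continuous_triangleCoords : Continuous triangleCoords := by
  unfold triangleCoords
  fun_prop

theorem continuous_triangleSupport : Continuous triangleSupport := by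
  have := continuous_triangleCoords
  unfold triangleSupport
  fun_prop

theorem triangleSupport_smul {r : ℝ} (hr : 0 ≤ r) (p : ℝ × ℝ) :
    triangleSupport (r • p) = r * triangleSupport p := by
  simp only [triangleSupport, triangleCoords, mul_max_of_nonneg _ _ hr, Prod.smul_fst,
    Prod.smul_snd, smul_eq_mul]
  congr 2 <;> ring

theorem triangleSupport_cos_sin (t : ℝ) :
    triangleSupport (cos t, sin t) =
      max (cos t) (max (cos (t - 2 * π / 3)) (cos (t + 2 * π / 3))) := by
  have hangle : 2 * π / 3 = π - π / 3 := by ring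
  rw [cos_sub, cos_add, hangle, cos_pi_sub, sin_pi_sub, cos_pi_div_three, sin_pi_div_three]
  simp only [triangleSupport, triangleCoords]
  congr 2 <;> ring

theorem periodic_triangleSupport_cos_sin :
    Function.Periodic (fun t => triangleSupport (cos t, sin t)) (2 * π / 3) := by
  intro t
  simp only [triangleSupport_cos_sin]
  rw [add_sub_cancel_right, show t + 2 * π / 3 + 2 * π / 3 = t - 2 * π / 3 + 2 * π by ring,
    cos_add_two_pi]
  ac_rfl

theorem triangleSupport_cos_sin_of_abs_le {t : ℝ} (ht : |t| ≤ π / 3) :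
    triangleSupport (cos t, sin t) = cos t := by
  obtain ⟨hlow, hhigh⟩ := abs_le.1 ht
  have hcos : ∀ u, |t| ≤ u → u ≤ π → cos u ≤ cos t := fun u htu hu =>
    cos_abs t ▸ cos_le_cos_of_nonneg_of_le_pi (abs_nonneg t) hu htu
  rw [triangleSupport_cos_sin, ← cos_neg (t - _)]
  exact max_eq_left (max_le (hcos _ (by linarith) (by linarith))
    (hcos _ (by linarith) (by linarith)))

theorem integral_triangleSupport_cos_sin_pow (k : ℕ) :
    ∫ t in -π..π, triangleSupport (cos t, sin t) ^ k =
      3 * ∫ t in -(π / 3)..π / 3, cos t ^ k := by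
  let f : ℝ → ℝ := fun t => triangleSupport (cos t, sin t) ^ k
  have hperiodic : Function.Periodic f (2 * π / 3) := fun t =>
    congrArg (· ^ k) (periodic_triangleSupport_cos_sin t)
  have hcont : Continuous f := by
    have := continuous_triangleSupport
    fun_prop
  calc ∫ t in -π..π, f t = ∫ t in -π..-π + (3 : ℤ) • (2 * π / 3), f t := by
        congr 1
        rw [zsmul_eq_mul, Int.cast_ofNat]
        ring
    _ = 3 * ∫ t in -(π / 3)..-(π / 3) + 2 * π / 3, f t := by
        rw [hperiodic.intervalIntegral_add_zsmul_eq 3 _ fun _ _ => hcont.intervalIntegrable _ _,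
          zsmul_eq_mul, Int.cast_ofNat, hperiodic.intervalIntegral_add_eq (-π) (-(π / 3))]
    _ = 3 * ∫ t in -(π / 3)..π / 3, f t := by
        rw [show -(π / 3) + 2 * π / 3 = π / 3 by ring]
    _ = 3 * ∫ t in -(π / 3)..π / 3, cos t ^ k := by
        congr 1
        refine intervalIntegral.integral_congr fun t ht => ?_
        rw [Set.uIcc_of_le (by linarith [pi_pos])] at ht
        simp only [f, triangleSupport_cos_sin_of_abs_le (abs_le.2 ht)]

theorem integral_triangleSupport_pow {v : ℝ≥0} (hv : v ≠ 0) (k : ℕ) :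
    ∫ p, triangleSupport p ^ k ∂((gaussianReal 0 v).prod (gaussianReal 0 v)) =
      (2 * v) ^ ((k : ℝ) / 2) * Gamma (k / 2 + 1) / (2 * π) *
        (3 * ∫ t in -(π / 3)..π / 3, cos t ^ k) := by
  have hk : (-2 : ℝ) < k := by linarith [k.cast_nonneg (α := ℝ)]
  rw [integral_prod_gaussianReal_of_homogeneous hv hk fun r hr p => ?_, smul_eq_mul,
    integral_triangleSupport_cos_sin_pow]
  rw [triangleSupport_smul hr.le, mul_pow, rpow_natCast, smul_eq_mul]

theorem integral_triangleSupport {v : ℝ≥0} (hv : v ≠ 0) :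
    ∫ p, triangleSupport p ∂((gaussianReal 0 v).prod (gaussianReal 0 v)) =
      3 * √3 * √(2 * v) / (4 * √π) := by
  have h := integral_triangleSupport_pow hv 1
  simp only [pow_one, Nat.cast_one, integral_cos, sin_neg, sin_pi_div_three, ← sqrt_eq_rpow,
    Gamma_add_one one_half_pos.ne', Gamma_one_half_eq] at h
  rw [h]
  field_simp
  rw [sq_sqrt pi_pos.le]
  ring

theorem integral_triangleSupport_sq {v : ℝ≥0} (hv : v ≠ 0) :
    ∫ p, triangleSupport p ^ 2 ∂((gaussianReal 0 v).prod (gaussianReal 0 v)) =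
      v * (1 + 3 * √3 / (4 * π)) := by
  rw [integral_triangleSupport_pow hv, integral_cos_sq, sin_neg, cos_neg, sin_pi_div_three,
    cos_pi_div_three, Nat.cast_ofNat, div_self two_ne_zero, rpow_one, one_add_one_eq_two, Gamma_two]
  field_simp
  ring

theorem memLp_triangleSupport (v : ℝ≥0) :
    MemLp triangleSupport 2 ((gaussianReal 0 v).prod (gaussianReal 0 v)) := by
  have hid : MemLp id 2 (gaussianReal 0 v) := memLp_id_gaussianReal 2
  have hfst := hid.comp_fst (gaussianReal 0 v)
  have hx := hfst.const_mul (-1 / 2)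
  have hy := (hid.comp_snd (gaussianReal 0 v)).const_mul (√3 / 2)
  refine (hfst.sup ((hx.add hy).sup (hx.sub hy))).ae_eq (.of_forall fun p => ?_)
  simp only [triangleSupport, triangleCoords, neg_div, neg_mul, one_div, div_eq_inv_mul p.1, id_eq,
    Pi.sup_apply, Pi.add_apply, Pi.sub_apply]

/-- The law of `(⟨u₀, G⟩, ⟨u₁, G⟩, ⟨u₂, G⟩)`, where the `uᵢ` are the vertices of an equilateral
triangle inscribed in the unit circle and `G` is a centered planar Gaussian vector with
covariance `v I`. -/
noncomputable def triangleGaussian (v : ℝ≥0) : Measure (ℝ × ℝ × ℝ) :=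
  ((gaussianReal 0 v).prod (gaussianReal 0 v)).map triangleCoords

instance isProbabilityMeasure_triangleGaussian (v : ℝ≥0) :
    IsProbabilityMeasure (triangleGaussian v) :=
  Measure.isProbabilityMeasure_map continuous_triangleCoords.measurable.aemeasurable

theorem map_linearCombination_triangleGaussian (v : ℝ≥0) (a b c : ℝ) :
    (triangleGaussian v).map (fun q => a * q.1 + b * q.2.1 + c * q.2.2) =
      gaussianReal 0 (v * (a ^ 2 + b ^ 2 + c ^ 2 - (a * b + a * c + b * c))).toNNReal := by
  have hlin : (fun q : ℝ × ℝ × ℝ => a * q.1 + b * q.2.1 + c * q.2.2) ∘ triangleCoords =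
      fun p => (a - b / 2 - c / 2) * p.1 + (√3 / 2 * (b - c)) * p.2 := by
    ext p
    simp only [triangleCoords, Function.comp_apply]
    ring
  have hsq : a ^ 2 + b ^ 2 + c ^ 2 - (a * b + a * c + b * c) =
      (a - b / 2 - c / 2) ^ 2 + (√3 / 2 * (b - c)) ^ 2 := by
    rw [mul_pow, div_pow, sq_sqrt zero_le_three]
    ring
  rw [triangleGaussian, Measure.map_map (by fun_prop) continuous_triangleCoords.measurable, hlin,
    map_linearCombination_prod_gaussianReal, mul_zero, mul_zero, add_zero, hsq]
  congr 1
  ext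
  rw [coe_toNNReal _ (by positivity)]
  push_cast
  ring

theorem hasLaw_triangleGaussian {Ω : Type*} [MeasurableSpace Ω] {P : Measure Ω} {X Y Z : Ω → ℝ}
    {v : ℝ≥0}
    (h : ∀ a b c : ℝ, HasLaw (fun ω => a * X ω + b * Y ω + c * Z ω) (gaussianReal 0
      (v * (a ^ 2 + b ^ 2 + c ^ 2 - (a * b + a * c + b * c))).toNNReal) P) :
    HasLaw (fun ω => (X ω, Y ω, Z ω)) (triangleGaussian v) P := by
  have hX : AEMeasurable X P := by simpa using (h 1 0 0).aemeasurable
  have hY : AEMeasurable Y P := by simpa using (h 0 1 0).aemeasurable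
  have hZ : AEMeasurable Z P := by simpa using (h 0 0 1).aemeasurable
  have : IsProbabilityMeasure P := (h 0 0 0).isProbabilityMeasure
  refine ⟨by fun_prop, measure_ext_of_forall_map_linearCombination fun a b c => ?_⟩
  rw [AEMeasurable.map_map_of_aemeasurable (by fun_prop) (by fun_prop),
    map_linearCombination_triangleGaussian]
  exact (h a b c).map_eq

section Max

variable {Ω : Type*} [MeasurableSpace Ω] {P : Measure Ω} {X Y Z : Ω → ℝ} {v : ℝ≥0}

theorem hasLaw_max_of_triangleGaussian
    (h : HasLaw (fun ω => (X ω, Y ω, Z ω)) (triangleGaussian v) P) :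
    HasLaw (fun ω => max (X ω) (max (Y ω) (Z ω)))
      (((gaussianReal 0 v).prod (gaussianReal 0 v)).map triangleSupport) P := by
  have hmax : HasLaw (fun q : ℝ × ℝ × ℝ => max q.1 (max q.2.1 q.2.2))
      (((gaussianReal 0 v).prod (gaussianReal 0 v)).map triangleSupport) (triangleGaussian v) :=
    ⟨by fun_prop, Measure.map_map (by fun_prop) continuous_triangleCoords.measurable⟩
  exact hmax.comp h

theorem memLp_max_of_triangleGaussian
    (h : HasLaw (fun ω => (X ω, Y ω, Z ω)) (triangleGaussian v) P) :
    MemLp (fun ω => max (X ω) (max (Y ω) (Z ω))) 2 P := by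
  have hlaw := hasLaw_max_of_triangleGaussian h
  have hid : MemLp id 2 (P.map fun ω => max (X ω) (max (Y ω) (Z ω))) := by
    rw [hlaw.map_eq, memLp_map_measure_iff (by fun_prop)
      continuous_triangleSupport.measurable.aemeasurable]
    exact memLp_triangleSupport v
  exact hid.comp_of_map hlaw.aemeasurable

theorem integral_max_pow_of_triangleGaussian
    (h : HasLaw (fun ω => (X ω, Y ω, Z ω)) (triangleGaussian v) P) (k : ℕ) :
    ∫ ω, max (X ω) (max (Y ω) (Z ω)) ^ k ∂P =
      ∫ p, triangleSupport p ^ k ∂((gaussianReal 0 v).prod (gaussianReal 0 v)) := by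
  rw [← integral_map (f := fun x : ℝ => x ^ k) continuous_triangleSupport.measurable.aemeasurable
    (by fun_prop)]
  exact (hasLaw_max_of_triangleGaussian h).integral_comp (f := fun x => x ^ k) (by fun_prop)

theorem integral_max_of_triangleGaussian
    (h : HasLaw (fun ω => (X ω, Y ω, Z ω)) (triangleGaussian v) P) (hv : v ≠ 0) :
    ∫ ω, max (X ω) (max (Y ω) (Z ω)) ∂P = 3 * √3 * √(2 * v) / (4 * √π) := by
  simpa only [pow_one, integral_triangleSupport hv] using
    integral_max_pow_of_triangleGaussian h 1

theorem integral_max_sq_of_triangleGaussian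
    (h : HasLaw (fun ω => (X ω, Y ω, Z ω)) (triangleGaussian v) P) (hv : v ≠ 0) :
    ∫ ω, max (X ω) (max (Y ω) (Z ω)) ^ 2 ∂P = v * (1 + 3 * √3 / (4 * π)) :=
  (integral_max_pow_of_triangleGaussian h 2).trans (integral_triangleSupport_sq hv)

theorem variance_max_of_triangleGaussian
    (h : HasLaw (fun ω => (X ω, Y ω, Z ω)) (triangleGaussian v) P) (hv : v ≠ 0) :
    Var[fun ω => max (X ω) (max (Y ω) (Z ω)); P] = v * (1 - (27 - 6 * √3) / (8 * π)) := by
  have : IsProbabilityMeasure P := h.isProbabilityMeasure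
  rw [variance_eq_sub (memLp_max_of_triangleGaussian h), integral_max_of_triangleGaussian h hv]
  simp only [Pi.pow_apply]
  rw [integral_max_sq_of_triangleGaussian h hv, div_pow, mul_pow, mul_pow, mul_pow,
    sq_sqrt zero_le_three, sq_sqrt (by positivity), sq_sqrt pi_pos.le]
  ring

end Max

end Triangle

/-- equations (ymer1)–(ymer2): `E[(W + max(Z₁,Z₂,Z₃))²] = 4 + 3√3/(2π)`
and `Var(W + max(Z₁,Z₂,Z₃)) = 4 − (27 − 6√3)/(4π)`.  Here `W ∼ N(0,2)` is independent of the
centered Gaussian vector `(Z₁,Z₂,Z₃)` with covariance matrix `[[2,−1,−1],[−1,2,−1],[−1,−1,2]]`. -/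
theorem second_moment_and_variance_of_limit
    {Ω : Type*} [MeasurableSpace Ω] (P : Measure Ω) [IsProbabilityMeasure P]
    (W Z1 Z2 Z3 : Ω → ℝ)
    (hWm : Measurable W) (hZ1 : Measurable Z1) (hZ2 : Measurable Z2) (hZ3 : Measurable Z3)
    (hW : P.map W = gaussianReal 0 2)
    (hZ : ∀ a b c : ℝ, P.map (fun ω => a * Z1 ω + b * Z2 ω + c * Z3 ω)
        = gaussianReal 0 (Real.toNNReal
            (2 * (a ^ 2 + b ^ 2 + c ^ 2) - 2 * (a * b + a * c + b * c))))
    (hindep : IndepFun W (fun ω => (Z1 ω, Z2 ω, Z3 ω)) P) :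
    ∫ ω, (W ω + max (Z1 ω) (max (Z2 ω) (Z3 ω))) ^ 2 ∂P
        = 4 + 3 * Real.sqrt 3 / (2 * π) ∧
    variance (fun ω => W ω + max (Z1 ω) (max (Z2 ω) (Z3 ω))) P
        = 4 - (27 - 6 * Real.sqrt 3) / (4 * π) := by
  let M : Ω → ℝ := fun ω => max (Z1 ω) (max (Z2 ω) (Z3 ω))
  have hZlaw : HasLaw (fun ω => (Z1 ω, Z2 ω, Z3 ω)) (triangleGaussian 2) P :=
    hasLaw_triangleGaussian fun a b c =>
      ⟨by fun_prop, (hZ a b c).trans (by rw [NNReal.coe_ofNat, mul_sub])⟩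
  have hWlaw : HasLaw W (gaussianReal 0 2) P := ⟨hWm.aemeasurable, hW⟩
  have hMmem : MemLp M 2 P := memLp_max_of_triangleGaussian hZlaw
  have hWmem : MemLp W 2 P := hWlaw.hasGaussianLaw.memLp_two
  have hWmean : ∫ ω, W ω ∂P = 0 := hWlaw.integral_eq.trans integral_id_gaussianReal
  have hWvar : Var[W; P] = 2 := hWlaw.variance_eq.trans variance_id_gaussianReal
  have hWM : IndepFun W M P :=
    hindep.comp (ψ := fun z : ℝ × ℝ × ℝ => max z.1 (max z.2.1 z.2.2)) measurable_id (by fun_prop)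
  constructor
  · rw [integral_add_sq_of_indepFun hWmem hMmem hWM hWmean,
      integral_max_sq_of_triangleGaussian hZlaw two_ne_zero,
      ← variance_of_integral_eq_zero hWm.aemeasurable hWmean, hWvar, NNReal.coe_ofNat]
    ring
  · refine (hWM.variance_add hWmem hMmem).trans ?_
    rw [hWvar, variance_max_of_triangleGaussian hZlaw two_ne_zero, NNReal.coe_ofNat]
    ring
end
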